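/- arXiv:1208.1412 — 3 statements merged into one kernel-verified Lean document; each statement's English description precedes it below -/
import Mathlib

section
/- Let p be a prime with p ≡ 1 (mod 8). Let h be the class number of the imaginary quadratic field ℚ(√−p) (whose discriminant is −4p, since p ≡ 1 (mod 4)), and let h′ be the class number of the imaginary quadratic field ℚ(√−2p) (whose discriminant is −8p). If p ≡ 1 (mod 16), then 8 divides h if and only if 8 divides h′; if p ≡ 9 (mod 16), then exactly one of h and h′ is divisible by 8. -/
open Filter Topology

lemma gl_by_parts (g u : ℕ → ℝ) (N : ℕ) :
    ∑ n ∈ Finset.range N, g n * u n = (∑ k ∈ Finset.range N, g k) * u N +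
      ∑ n ∈ Finset.range N, (∑ k ∈ Finset.range (n+1), g k) * (u n - u (n+1)) := by
  induction N with
  | zero => simp
  | succ N ih =>
    rw [Finset.sum_range_succ, ih, Finset.sum_range_succ (n := N)
      (f := fun n => (∑ k ∈ Finset.range (n+1), g k) * (u n - u (n+1))), Finset.sum_range_succ g N]
    ring

noncomputable def glu (s : ℝ) (n : ℕ) : ℝ := ((n:ℝ)+1) ^ (-s)

lemma glu_diff (s : ℝ) (h1 : 1 ≤ s) (h2 : s ≤ 2) (n : ℕ) :
    |glu s n - glu s (n+1)| ≤ 2 * (1 / ((n:ℝ)+1)^2) := by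
  have hn : (0:ℝ) < (n:ℝ)+1 := by positivity
  have hle : glu s (n+1) ≤ glu s n := by
    unfold glu
    apply Real.rpow_le_rpow_of_nonpos hn (by push_cast; linarith) (by linarith)
  rw [abs_of_nonneg (by linarith)]
  have e : glu s (n+1) = glu s n * (((n:ℝ)+1)/((n:ℝ)+2)) ^ s := by
    unfold glu
    push_cast
    rw [Real.div_rpow hn.le (by positivity), Real.rpow_neg hn.le, Real.rpow_neg (by positivity)]
    have : ((n:ℝ)+1)^s ≠ 0 := (Real.rpow_pos_of_pos hn s).ne'
    rw [show (n:ℝ)+1+1 = (n:ℝ)+2 by ring]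
    field_simp
  have hq : (((n:ℝ)+1)/((n:ℝ)+2)) ^ (2:ℝ) ≤ (((n:ℝ)+1)/((n:ℝ)+2)) ^ s := by
    apply Real.rpow_le_rpow_of_exponent_ge (by positivity) _ h2
    rw [div_le_one (by positivity)]; linarith
  have hu : glu s n ≤ 1 / ((n:ℝ)+1) := by
    unfold glu
    rw [one_div, ← Real.rpow_neg_one]
    apply Real.rpow_le_rpow_of_exponent_le (by linarith [(Nat.cast_nonneg n : (0:ℝ) ≤ n)]) (by linarith)
  have hu0 : 0 ≤ glu s n := by unfold glu; positivity
  rw [e]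
  have h3 : 1 - (((n:ℝ)+1)/((n:ℝ)+2)) ^ s ≤ 2 / ((n:ℝ)+1) := by
    have : 1 - (((n:ℝ)+1)/((n:ℝ)+2)) ^ (2:ℝ) ≤ 2 / ((n:ℝ)+1) := by
      rw [show (2:ℝ) = ((2:ℕ):ℝ) by norm_num, Real.rpow_natCast]
      push_cast
      rw [div_pow, sub_le_iff_le_add, div_add_div _ _ (by positivity) (by positivity), le_div_iff₀ (by positivity)]
      nlinarith [(Nat.cast_nonneg n : (0:ℝ) ≤ n), sq_nonneg (n:ℝ)]
    linarith
  have h4 : 0 ≤ 2 / ((n:ℝ)+1) := by positivity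
  calc glu s n - glu s n * (((n:ℝ)+1)/((n:ℝ)+2)) ^ s = glu s n * (1 - (((n:ℝ)+1)/((n:ℝ)+2)) ^ s) := by ring
    _ ≤ glu s n * (2 / ((n:ℝ)+1)) := by gcongr
    _ ≤ (1 / ((n:ℝ)+1)) * (2 / ((n:ℝ)+1)) := by gcongr
    _ = _ := by field_simp

lemma gl_dirichlet (g : ℕ → ℝ) (C : ℝ) (hC : ∀ N, |∑ k ∈ Finset.range N, g k| ≤ C) :
    ∃ L, Tendsto (fun N => ∑ n ∈ Finset.range N, g n * glu 1 n) atTop (𝓝 L) ∧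
      ∀ F : ℝ → ℝ, (∀ s, 1 < s → HasSum (fun n => g n * glu s n) (F s)) →
        Tendsto F (𝓝[>] 1) (𝓝 L) := by
  have hC0 : 0 ≤ C := le_trans (abs_nonneg _) (hC 0)
  set D : ℝ → ℕ → ℝ := fun s n => (∑ k ∈ Finset.range (n+1), g k) * (glu s n - glu s (n+1)) with hD
  set bd : ℕ → ℝ := fun n => C * (2 * (1 / ((n:ℝ)+1)^2)) with hbd
  have hbds : Summable bd := by
    have := (summable_nat_add_iff 1).mpr (Real.summable_one_div_nat_pow.mpr (one_lt_two))
    push_cast at this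
    exact (this.mul_left 2).mul_left C
  have hDb : ∀ s, 1 ≤ s → s ≤ 2 → ∀ n, ‖D s n‖ ≤ bd n := by
    intro s h1 h2 n
    rw [Real.norm_eq_abs, abs_mul]
    exact mul_le_mul (hC _) (glu_diff s h1 h2 n) (abs_nonneg _) hC0
  have hpart : ∀ s, 1 ≤ s → s ≤ 2 → Tendsto (fun N => ∑ n ∈ Finset.range N, g n * glu s n) atTop
      (𝓝 (∑' n, D s n)) := by
    intro s h1 h2
    have hs : Summable (D s) := Summable.of_norm_bounded hbds (hDb s h1 h2)
    have t1 := hs.hasSum.tendsto_sum_nat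
    have t2 : Tendsto (fun N => (∑ k ∈ Finset.range N, g k) * glu s N) atTop (𝓝 0) := by
      have hu : Tendsto (fun N : ℕ => C * glu s N) atTop (𝓝 0) := by
        rw [show (0:ℝ) = C * 0 by ring]
        apply Tendsto.const_mul
        unfold glu
        have := (tendsto_rpow_neg_atTop (show 0 < s by linarith)).comp
          (tendsto_atTop_add_const_right atTop (1:ℝ) tendsto_natCast_atTop_atTop)
        exact this
      apply squeeze_zero_norm _ hu
      intro N
      rw [Real.norm_eq_abs, abs_mul]
      have : 0 ≤ glu s N := by unfold glu; positivity
      rw [abs_of_nonneg this]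
      exact mul_le_mul_of_nonneg_right (hC N) this
    have := t2.add t1
    rw [zero_add] at this
    refine this.congr (fun N => ?_)
    exact (gl_by_parts g (glu s) N).symm
  refine ⟨∑' n, D 1 n, hpart 1 le_rfl one_le_two, fun F hF => ?_⟩
  have key : Tendsto (fun s => ∑' n, D s n) (𝓝[>] 1) (𝓝 (∑' n, D 1 n)) := by
    apply tendsto_tsum_of_dominated_convergence hbds
    · intro n
      apply Tendsto.const_mul
      have hc : ∀ m : ℕ, Continuous (fun s => glu s m) := by
        intro m
        unfold glu
        exact Real.continuous_const_rpow (by positivity) |>.comp continuous_neg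
      exact (((hc n).sub (hc (n+1))).tendsto 1).mono_left nhdsWithin_le_nhds
    · have : Set.Ioc (1:ℝ) 2 ∈ 𝓝[>] (1:ℝ) := Ioc_mem_nhdsGT one_lt_two
      filter_upwards [this] with s hs n
      exact hDb s hs.1.le hs.2 n
  refine key.congr' ?_
  have : Set.Ioc (1:ℝ) 2 ∈ 𝓝[>] (1:ℝ) := Ioc_mem_nhdsGT one_lt_two
  filter_upwards [this] with s hs
  exact tendsto_nhds_unique (hpart s hs.1.le hs.2) (hF s hs.1).tendsto_sum_nat

lemma gl_one_sub_exp (y : ℝ) : (1:ℂ) - Complex.exp (2 * Real.pi * y * Complex.I) =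
    ((2 * Real.sin (Real.pi * y) : ℝ) : ℂ) *
    (Complex.cos ((Real.pi * y - Real.pi / 2 : ℝ) : ℂ) + Complex.sin ((Real.pi * y - Real.pi / 2 : ℝ) : ℂ) * Complex.I) := by
  push_cast
  rw [Complex.cos_sub_pi_div_two, Complex.sin_sub_pi_div_two]
  rw [show (2 * Real.pi * y * Complex.I : ℂ) = (2 * (Real.pi * y) : ℂ) * Complex.I by ring, Complex.exp_mul_I,
    Complex.cos_two_mul, Complex.sin_two_mul]
  have := Complex.sin_sq_add_cos_sq (Real.pi * y)
  linear_combination (-2) * this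

lemma gl_partial_bound (y : ℝ) (h0 : 0 < y) (h1 : y < 1) : ∃ C, ∀ N,
    |∑ k ∈ Finset.range N, Real.sin (2 * Real.pi * y * ((k:ℝ)+1))| ≤ C := by
  set z := Complex.exp (2 * Real.pi * y * Complex.I) with hz
  have hsin : 0 < Real.sin (Real.pi * y) := Real.sin_pos_of_pos_of_lt_pi (by positivity)
    (by nlinarith [Real.pi_pos])
  have hz1 : z ≠ 1 := by
    intro h
    have := gl_one_sub_exp y
    rw [← hz, h, sub_self, ← Complex.exp_mul_I] at this
    have h2 := this.symm
    rw [mul_eq_zero] at h2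
    rcases h2 with h2 | h2
    · rw [Complex.ofReal_eq_zero] at h2; linarith
    · exact Complex.exp_ne_zero _ h2
  have hzn : ‖z‖ = 1 := by
    rw [hz, show (2 * Real.pi * y * Complex.I : ℂ) = ((2 * Real.pi * y : ℝ) : ℂ) * Complex.I by push_cast; ring]
    exact Complex.norm_exp_ofReal_mul_I _
  refine ⟨2 / ‖z - 1‖, fun N => ?_⟩
  have e : ∑ k ∈ Finset.range N, Real.sin (2 * Real.pi * y * ((k:ℝ)+1)) =
      (z * ∑ k ∈ Finset.range N, z ^ k).im := by
    rw [Finset.mul_sum, Complex.im_sum]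
    refine Finset.sum_congr rfl fun k _ => ?_
    rw [← pow_succ', hz, ← Complex.exp_nat_mul]
    rw [show ((k+1:ℕ):ℂ) * (2 * Real.pi * y * Complex.I) = ((2 * Real.pi * y * ((k:ℝ)+1) : ℝ):ℂ) * Complex.I by
      push_cast; ring, Complex.exp_ofReal_mul_I_im]
  rw [e]
  refine (Complex.abs_im_le_norm _).trans ?_
  rw [norm_mul, hzn, one_mul, geom_sum_eq hz1, norm_div]
  gcongr
  refine (norm_sub_le _ _).trans ?_
  rw [norm_pow, hzn]; norm_num

lemma gl_abel_value (y : ℝ) (h0 : 0 < y) (h1 : y < 1) (L : ℝ)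
    (hL : Tendsto (fun N => ∑ n ∈ Finset.range N, Real.sin (2 * Real.pi * y * n) / n) atTop (𝓝 L)) :
    L = Real.pi * (1/2 - y) := by
  have hsin : 0 < Real.sin (Real.pi * y) := Real.sin_pos_of_pos_of_lt_pi (by positivity)
    (by nlinarith [Real.pi_pos])
  set z := Complex.exp (2 * Real.pi * y * Complex.I) with hz
  have hzn : ‖z‖ = 1 := by
    rw [hz, show (2 * Real.pi * y * Complex.I : ℂ) = ((2 * Real.pi * y : ℝ) : ℂ) * Complex.I by push_cast; ring]
    exact Complex.norm_exp_ofReal_mul_I _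
  have t1 := Real.tendsto_tsum_powerSeries_nhdsWithin_lt hL
  have harg : Complex.arg (1 - z) = Real.pi * y - Real.pi / 2 := by
    rw [hz, gl_one_sub_exp]
    apply Complex.arg_mul_cos_add_sin_mul_I (by linarith)
    constructor <;> nlinarith [Real.pi_pos]
  have hslit : (1 - z) ∈ Complex.slitPlane := by
    rw [Complex.mem_slitPlane_iff_arg]
    refine ⟨?_, ?_⟩
    · rw [harg]; nlinarith [Real.pi_pos]
    · rw [hz, gl_one_sub_exp, ← Complex.exp_mul_I]
      apply mul_ne_zero _ (Complex.exp_ne_zero _)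
      rw [Complex.ofReal_ne_zero]; linarith
  have t2 : Tendsto (fun x : ℝ => (-Complex.log (1 - x * z)).im) (𝓝[<] 1) (𝓝 (-(Complex.log (1 - z))).im) := by
    have hc : ContinuousAt (fun x : ℝ => (-Complex.log (1 - x * z)).im) 1 := by
      apply Complex.continuous_im.continuousAt.comp
      apply ContinuousAt.neg
      apply ContinuousAt.clog
      · fun_prop
      · simpa using hslit
    have := hc.tendsto.mono_left (nhdsWithin_le_nhds (s := Set.Iio 1))
    simpa using this
  have e : ∀ᶠ x : ℝ in 𝓝[<] 1, ∑' n : ℕ, Real.sin (2 * Real.pi * y * n) / n * x ^ n =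
      (-Complex.log (1 - x * z)).im := by
    have : Set.Ioo (0:ℝ) 1 ∈ 𝓝[<] (1:ℝ) := Ioo_mem_nhdsLT one_pos
    filter_upwards [this] with x hx
    have hlt : ‖(x:ℂ) * z‖ < 1 := by
      rw [norm_mul, hzn, mul_one, Complex.norm_real, Real.norm_eq_abs, abs_of_pos hx.1]; exact hx.2
    have hs := Complex.hasSum_im (Complex.hasSum_taylorSeries_neg_log hlt)
    rw [← hs.tsum_eq]
    refine tsum_congr fun n => ?_
    rw [mul_pow, hz, ← Complex.exp_nat_mul,
      show ((n:ℕ):ℂ) * (2 * Real.pi * y * Complex.I) = ((2 * Real.pi * y * (n:ℝ) : ℝ):ℂ) * Complex.I by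
      push_cast; ring, ← Complex.ofReal_pow, Complex.div_natCast_im, Complex.im_ofReal_mul, Complex.exp_ofReal_mul_I_im]
    ring
  have := tendsto_nhds_unique (t1.congr' e) t2
  rw [this, Complex.neg_im, Complex.log_im, harg]
  ring

theorem gl_sinZeta_one (y : ℝ) (h0 : 0 < y) (h1 : y < 1) :
    HurwitzZeta.sinZeta (y : UnitAddCircle) 1 = ((Real.pi * (1/2 - y) : ℝ) : ℂ) := by
  obtain ⟨C, hC⟩ := gl_partial_bound y h0 h1
  obtain ⟨L, hL, hF⟩ := gl_dirichlet (fun k => Real.sin (2 * Real.pi * y * ((k:ℝ)+1))) C hC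
  have hLv : L = Real.pi * (1/2 - y) := by
    apply gl_abel_value y h0 h1
    rw [← tendsto_add_atTop_iff_nat 1]
    refine hL.congr fun N => ?_
    rw [Finset.sum_range_succ']
    simp [glu, Real.rpow_neg_one, div_eq_mul_inv]
  have hc : Tendsto (fun s : ℝ => HurwitzZeta.sinZeta (y : UnitAddCircle) (s:ℂ)) (𝓝[>] 1)
      (𝓝 (HurwitzZeta.sinZeta (y : UnitAddCircle) 1)) := by
    have : Continuous (fun s : ℝ => HurwitzZeta.sinZeta (y : UnitAddCircle) (s:ℂ)) :=
      (HurwitzZeta.differentiableAt_sinZeta _).continuous.comp Complex.continuous_ofReal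
    have := (this.tendsto 1).mono_left (nhdsWithin_le_nhds (s := Set.Ioi 1))
    simpa using this
  have hsum : ∀ s : ℝ, 1 < s → HasSum (fun n : ℕ => ((Real.sin (2 * Real.pi * y * ((n:ℝ)+1)) * glu s n : ℝ) : ℂ))
      (HurwitzZeta.sinZeta (y : UnitAddCircle) (s:ℂ)) := by
    intro s hs
    have h := HurwitzZeta.hasSum_nat_sinZeta y (s := (s:ℂ)) (by simpa using hs)
    rw [← hasSum_nat_add_iff' 1] at h
    simp only [Finset.range_one, Finset.sum_singleton] at h
    simp only [Nat.cast_zero, mul_zero, Real.sin_zero, Complex.ofReal_zero, zero_div, sub_zero] at h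
    refine h.congr_fun fun n => ?_
    rw [Complex.ofReal_mul, div_eq_mul_inv, ← Complex.cpow_neg]
    push_cast
    congr 1
    unfold glu
    rw [Complex.ofReal_cpow (by positivity)]
    push_cast; rfl
  have hre : Tendsto (fun s : ℝ => (HurwitzZeta.sinZeta (y : UnitAddCircle) (s:ℂ)).re) (𝓝[>] 1) (𝓝 L) := by
    apply hF
    intro s hs
    have := Complex.hasSum_re (hsum s hs)
    simpa only [Complex.ofReal_re] using this
  have him : ∀ s : ℝ, 1 < s → (((HurwitzZeta.sinZeta (y : UnitAddCircle) (s:ℂ)).re : ℝ) : ℂ) = HurwitzZeta.sinZeta (y : UnitAddCircle) (s:ℂ) := by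
    intro s hs
    apply Complex.ext
    · simp
    · have := (Complex.hasSum_im (hsum s hs)).tsum_eq
      simp only [Complex.ofReal_im, tsum_zero] at this
      simpa using this
  rw [← hLv]
  refine tendsto_nhds_unique hc ?_
  refine ((Complex.continuous_ofReal.tendsto L).comp hre).congr' ?_
  filter_upwards [self_mem_nhdsWithin] with s hs
  exact him s hs

noncomputable def glT (p : ℕ) [Fact p.Prime] (k : ℕ) : ℤ := ∑ j ∈ Finset.range (k+1), legendreSym p (j:ℤ)

section
variable (p : ℕ) [Fact p.Prime]

lemma gl_ls_reflect (h8 : p % 8 = 1) (j : ℕ) (hj : j ≤ p) :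
    legendreSym p ((p - j : ℕ) : ℤ) = legendreSym p (j:ℤ) := by
  have h1 : legendreSym p (-1) = 1 := by
    rw [legendreSym.at_neg_one (by rintro rfl; omega), ZMod.χ₄_nat_one_mod_four (by omega)]
  have : legendreSym p ((p - j : ℕ) : ℤ) = legendreSym p (-1 * (j:ℤ)) := by
    unfold legendreSym
    congr 1
    rw [Nat.cast_sub hj]; simp
  rw [this, legendreSym.mul, h1, one_mul]

lemma gl_ls_two (h8 : p % 8 = 1) : legendreSym p 2 = 1 := by
  rw [legendreSym.at_two (by rintro rfl; omega), ZMod.χ₈_nat_eq_if_mod_eight]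
  simp [h8]; omega

lemma gl_ls_double (h8 : p % 8 = 1) (j : ℕ) : legendreSym p ((2 * j : ℕ):ℤ) = legendreSym p (j:ℤ) := by
  push_cast
  rw [legendreSym.mul, gl_ls_two p h8, one_mul]

lemma gl_sum_range_zmod {M : Type*} [AddCommMonoid M] (f : ZMod p → M) :
    ∑ j ∈ Finset.range p, f (j : ZMod p) = ∑ x : ZMod p, f x := by
  have : NeZero p := ⟨(Fact.out : p.Prime).ne_zero⟩
  refine Finset.sum_bij (fun j _ => (j : ZMod p)) (by simp) ?_ ?_ (by simp)
  · intro a ha b hb h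
    rw [ZMod.natCast_eq_natCast_iff'] at h
    rw [Nat.mod_eq_of_lt (Finset.mem_range.mp ha), Nat.mod_eq_of_lt (Finset.mem_range.mp hb)] at h
    exact h
  · intro b _
    exact ⟨b.val, Finset.mem_range.mpr (ZMod.val_lt b), by simp⟩

lemma gl_total (h8 : p % 8 = 1) : ∑ j ∈ Finset.range p, legendreSym p (j:ℤ) = 0 := by
  have := gl_sum_range_zmod p (fun x => quadraticChar (ZMod p) x)
  rw [quadraticChar_sum_zero (by rw [ZMod.ringChar_zmod_n]; rintro rfl; omega)] at this
  simpa [legendreSym] using this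

lemma gl_Ico (h8 : p % 8 = 1) (k : ℕ) (hk : k < p) :
    ∑ j ∈ Finset.Ico (p - k) p, legendreSym p (j:ℤ) = glT p k := by
  unfold glT
  rw [Finset.sum_range_succ']
  simp only [Nat.cast_zero, legendreSym.at_zero, add_zero]
  refine Finset.sum_bij' (fun j _ => p - j - 1) (fun i _ => p - (i+1)) ?_ ?_ ?_ ?_ ?_
  · intro a ha; simp only [Finset.mem_Ico, Finset.mem_range] at *; omega
  · intro a ha; simp only [Finset.mem_Ico, Finset.mem_range] at *; omega
  · intro a ha; simp only [Finset.mem_Ico] at *; omega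
  · intro a ha; simp only [Finset.mem_range] at *; omega
  · intro a ha
    simp only [Finset.mem_Ico] at ha
    rw [show p - a - 1 + 1 = p - a by omega, gl_ls_reflect p h8 a (by omega)]

lemma gl_total_mul (h8 : p % 8 = 1) : ∑ j ∈ Finset.range p, legendreSym p (j:ℤ) * (j:ℤ) = 0 := by
  have h0 := gl_total p h8
  have hp0 : 0 < p := (Fact.out : p.Prime).pos
  have e : ∀ f : ℕ → ℤ, ∑ j ∈ Finset.range p, f j = f 0 + ∑ j ∈ Finset.Ico 1 p, f j := by
    intro f
    rw [Finset.range_eq_Ico, Finset.sum_eq_sum_Ico_succ_bot hp0]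
  rw [e] at h0 ⊢
  simp only [Nat.cast_zero, legendreSym.at_zero, zero_add, mul_zero] at h0 ⊢
  have r : ∑ j ∈ Finset.Ico 1 p, legendreSym p (j:ℤ) * (j:ℤ) =
      ∑ j ∈ Finset.Ico 1 p, legendreSym p (j:ℤ) * ((p:ℤ) - j) := by
    refine Finset.sum_bij' (fun j _ => p - j) (fun j _ => p - j) ?_ ?_ ?_ ?_ ?_
    · intro a ha; simp only [Finset.mem_Ico] at *; omega
    · intro a ha; simp only [Finset.mem_Ico] at *; omega
    · intro a ha; simp only [Finset.mem_Ico] at *; omega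
    · intro a ha; simp only [Finset.mem_Ico] at *; omega
    · intro a ha
      simp only [Finset.mem_Ico] at ha
      rw [gl_ls_reflect p h8 a (by omega), Nat.cast_sub (by omega)]
      ring
  simp only [mul_sub, Finset.sum_sub_distrib, ← Finset.sum_mul, h0] at r
  linarith

lemma gl_T_half (m : ℕ) (hm : p = 8 * m + 1) : glT p (4*m) = 0 := by
  have h8 : p % 8 = 1 := by omega
  have h1 := gl_Ico p h8 (4*m) (by omega)
  have h2 := gl_total p h8
  rw [← Finset.sum_range_add_sum_Ico _ (show p - 4*m ≤ p by omega), h1,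
    show p - 4 * m = 4*m+1 by omega] at h2
  change glT p (4*m) + _ = 0 at h2
  omega

lemma gl_T_rel (m : ℕ) (hm : p = 8 * m + 1) : glT p (2*m) = glT p m - glT p (3*m) := by
  have h8 : p % 8 = 1 := by omega
  have h4 := gl_T_half p m hm
  have hs : glT p (4*m) = glT p (3*m) + ∑ j ∈ Finset.Ico (3*m+1) (4*m+1), legendreSym p (j:ℤ) := by
    unfold glT
    rw [Finset.sum_range_add_sum_Ico _ (by omega)]
  have hsplit : ∀ k : ℕ, ∀ f : ℕ → ℤ, ∑ j ∈ Finset.range (2*k+1), f j =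
      ∑ j ∈ Finset.range (k+1), f (2*j) + ∑ j ∈ Finset.range k, f (2*j+1) := by
    intro k f
    induction k with
    | zero => simp
    | succ k ih =>
      rw [show 2*(k+1)+1 = 2*k+1+1+1 by ring, Finset.sum_range_succ, Finset.sum_range_succ, ih,
        Finset.sum_range_succ (n := k+1), Finset.sum_range_succ (n := k) (f := fun j => f (2*j+1))]
      rw [show 2*k+1+1 = 2*(k+1) by ring]
      ring
  have h2 : glT p (2*m) = glT p m + ∑ j ∈ Finset.range m, legendreSym p ((2*j+1:ℕ):ℤ) := by
    unfold glT
    rw [hsplit]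
    congr 1
    exact Finset.sum_congr rfl fun j _ => gl_ls_double p h8 j
  have h3 : ∑ j ∈ Finset.range m, legendreSym p ((2*j+1:ℕ):ℤ) =
      ∑ j ∈ Finset.Ico (3*m+1) (4*m+1), legendreSym p (j:ℤ) := by
    refine Finset.sum_bij' (fun j _ => 4*m - j) (fun j _ => 4*m - j) ?_ ?_ ?_ ?_ ?_
    · intro a ha; simp only [Finset.mem_Ico, Finset.mem_range] at *; omega
    · intro a ha; simp only [Finset.mem_Ico, Finset.mem_range] at *; omega
    · intro a ha; simp only [Finset.mem_range] at *; omega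
    · intro a ha; simp only [Finset.mem_Ico] at *; omega
    · intro a ha
      simp only [Finset.mem_range] at ha
      rw [← gl_ls_double p h8 (4*m-a), ← gl_ls_reflect p h8 (2*a+1) (by omega)]
      congr 2
      omega
  rw [h2, h3]
  omega

lemma gl_T_parity (k : ℕ) (hk : k < p) : (2:ℤ) ∣ glT p k - k := by
  induction k with
  | zero => simp [glT]
  | succ k ih =>
    have e : glT p (k+1) = glT p k + legendreSym p ((k+1:ℕ):ℤ) := by
      unfold glT; rw [Finset.sum_range_succ]
    have hne : (((k+1:ℕ):ℤ) : ZMod p) ≠ 0 := by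
      rw [Int.cast_natCast, Ne, ZMod.natCast_eq_zero_iff]
      exact Nat.not_dvd_of_pos_of_lt (by omega) hk
    have := ih (by omega)
    rcases legendreSym.eq_one_or_neg_one p hne with h | h <;> rw [e, h] <;> push_cast <;> omega

end

theorem gl_final (p : ℕ) [Fact p.Prime] (m : ℕ) (hm : p = 8 * m + 1) (h h' : ℕ)
    (h1 : (h:ℤ) = 2 * glT p (2*m) ∨ (h:ℤ) = -(2 * glT p (2*m)))
    (h2 : (h':ℤ) = 2 * (glT p m + glT p (3*m)) ∨ (h':ℤ) = -(2 * (glT p m + glT p (3*m)))) :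
    (p % 16 = 1 → (8 ∣ h ↔ 8 ∣ h')) ∧ (p % 16 = 9 → Xor' (8 ∣ h) (8 ∣ h')) := by
  have a := gl_T_rel p m hm
  have b := gl_T_parity p m (by omega)
  have c := gl_T_parity p (2*m) (by omega)
  push_cast at c
  unfold Xor' Xor
  constructor <;> intro hp <;> omega

lemma gl_gauss (p : ℕ) [Fact p.Prime] (h8 : p % 8 = 1) : ∃ G : ℝ, (G = √p ∨ G = -√p) ∧
    ∀ n : ℕ, ∑ j ∈ Finset.range p, (legendreSym p (j:ℤ) : ℂ) *
      Complex.exp (2 * Real.pi * Complex.I * (n * j) / p) = (legendreSym p (n:ℤ) : ℂ) * G := by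
  have hp : p.Prime := Fact.out
  have : NeZero p := ⟨hp.ne_zero⟩
  set χ : MulChar (ZMod p) ℂ := (quadraticChar (ZMod p)).ringHomComp (Int.castRingHom ℂ) with hχ
  have hch : ringChar (ZMod p) ≠ 2 := by rw [ZMod.ringChar_zmod_n]; rintro rfl; omega
  have hq : χ.IsQuadratic := (quadraticChar_isQuadratic (ZMod p)).comp _
  have hne : χ ≠ 1 := by
    rw [hχ, Ne, MulChar.ringHomComp_eq_one_iff (RingHom.injective_int _)]
    exact quadraticChar_ne_one hch
  have hm1 : χ (-1) = 1 := by
    have h1 : legendreSym p (-1) = 1 := by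
      rw [legendreSym.at_neg_one (by rintro rfl; omega), ZMod.χ₄_nat_one_mod_four (by omega)]
    unfold legendreSym at h1
    rw [hχ, MulChar.ringHomComp_apply]
    push_cast at h1
    rw [h1]; simp
  have hsq := gaussSum_sq hne hq (ZMod.isPrimitive_stdAddChar p)
  rw [hm1, one_mul, ZMod.card] at hsq
  have hG : ∃ G : ℝ, (G = √p ∨ G = -√p) ∧ gaussSum χ (ZMod.stdAddChar) = (G:ℂ) := by
    have h2 : ((√p : ℝ) : ℂ)^2 = p := by
      rw [← Complex.ofReal_pow, Real.sq_sqrt (Nat.cast_nonneg p)]; simp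
    rw [← h2, sq_eq_sq_iff_eq_or_eq_neg] at hsq
    rcases hsq with h | h
    · exact ⟨_, Or.inl rfl, h⟩
    · exact ⟨_, Or.inr rfl, by rw [h]; push_cast; rfl⟩
  obtain ⟨G, hG1, hG2⟩ := hG
  refine ⟨G, hG1, fun n => ?_⟩
  have e : ∑ j ∈ Finset.range p, (legendreSym p (j:ℤ) : ℂ) *
      Complex.exp (2 * Real.pi * Complex.I * (n * j) / p) =
      gaussSum χ (AddChar.mulShift ZMod.stdAddChar (n : ZMod p)) := by
    unfold gaussSum
    rw [← gl_sum_range_zmod p (fun x => χ x * (AddChar.mulShift ZMod.stdAddChar (n : ZMod p)) x)]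
    refine Finset.sum_congr rfl fun j _ => ?_
    rw [AddChar.mulShift_apply, show ((n:ZMod p) * (j:ZMod p)) = ((n*j : ℕ) : ZMod p) by push_cast; rfl]
    have := ZMod.stdAddChar_coe (N := p) ((n*j : ℕ):ℤ)
    rw [Int.cast_natCast] at this
    rw [this]
    congr 1
    · simp [hχ, legendreSym, MulChar.ringHomComp_apply]
    · congr 1; push_cast; ring
  rw [e]
  have hχn : χ (n : ZMod p) = (legendreSym p (n:ℤ) : ℂ) := by
    simp [hχ, legendreSym, MulChar.ringHomComp_apply]
  by_cases hn : (n : ZMod p) = 0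
  · have h0 : legendreSym p (n:ℤ) = 0 := by rw [legendreSym.eq_zero_iff]; exact_mod_cast hn
    rw [hn, h0, AddChar.mulShift_zero, gaussSum_one_right hne]; simp
  · have := gaussSum_mulShift_eq χ ZMod.stdAddChar (Units.mk0 (n : ZMod p) hn)
    rw [Units.val_mk0, hq.inv, hχn, hG2] at this
    exact this

lemma gl_gauss_sin (p : ℕ) [Fact p.Prime] (G : ℝ) 
    (hG : ∀ n : ℕ, ∑ j ∈ Finset.range p, (legendreSym p (j:ℤ) : ℂ) *
      Complex.exp (2 * Real.pi * Complex.I * (n * j) / p) = (legendreSym p (n:ℤ) : ℂ) * G) (y : ℝ) (n : ℕ) :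
    ∑ j ∈ Finset.range p, (legendreSym p (j:ℤ) : ℝ) * Real.sin (2 * Real.pi * (y + j / p) * n) =
      G * ((legendreSym p (n:ℤ) : ℝ) * Real.sin (2 * Real.pi * y * n)) := by
  have h := congrArg (fun z => (z * Complex.exp ((2 * Real.pi * y * n : ℝ) * Complex.I)).im) (hG n)
  simp only [Finset.sum_mul, Complex.im_sum] at h
  have e2 : (((legendreSym p (n:ℤ) : ℂ) * G) * Complex.exp ((2 * Real.pi * y * n : ℝ) * Complex.I)).im =
     G * ((legendreSym p (n:ℤ) : ℝ) * Real.sin (2 * Real.pi * y * n)) := by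
    rw [show ((legendreSym p (n:ℤ) : ℂ) * G) = (((legendreSym p (n:ℤ) : ℝ) * G : ℝ) : ℂ) by push_cast; rfl,
      Complex.im_ofReal_mul, Complex.exp_ofReal_mul_I_im]
    ring
  rw [← e2, ← h]
  refine Finset.sum_congr rfl fun j _ => ?_
  rw [mul_assoc (legendreSym p (j:ℤ) : ℂ) _ _, ← Complex.exp_add, show (legendreSym p (j:ℤ) : ℂ) = ((legendreSym p (j:ℤ) : ℝ) : ℂ) by push_cast; rfl,
    Complex.im_ofReal_mul]
  rw [show (2 * Real.pi * Complex.I * (n * j) / p + (2 * Real.pi * y * n : ℝ) * Complex.I : ℂ) =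
    ((2 * Real.pi * (y + j / p) * n : ℝ) : ℂ) * Complex.I by push_cast; ring, Complex.exp_ofReal_mul_I_im]

lemma gl_Lval (p : ℕ) [Fact p.Prime] (m : ℕ) (hm : p = 8 * m + 1) (G : ℝ) (hG0 : G ≠ 0)
    (hG : ∀ n : ℕ, ∑ j ∈ Finset.range p, (legendreSym p (j:ℤ) : ℂ) *
      Complex.exp (2 * Real.pi * Complex.I * (n * j) / p) = (legendreSym p (n:ℤ) : ℂ) * G)
    (c : ℕ) (hc0 : 0 < c) (hc8 : c < 8) :
    ∃ F : ℝ → ℂ, (∀ s : ℝ, 1 < s → HasSum (fun n : ℕ =>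
        (((legendreSym p (n:ℤ) : ℝ) * Real.sin (2 * Real.pi * (c/8) * n) : ℝ) : ℂ) / (n:ℂ) ^ (s:ℂ)) (F s)) ∧
      Tendsto F (𝓝[>] 1) (𝓝 ((Real.pi * glT p (c * m) / G : ℝ) : ℂ)) := by
  have h8 : p % 8 = 1 := by omega
  have hp0 : (0:ℝ) < p := by exact_mod_cast (Fact.out : p.Prime).pos
  refine ⟨fun s => (∑ j ∈ Finset.range p, (legendreSym p (j:ℤ) : ℂ) *
    HurwitzZeta.sinZeta (((c/8 + j/p : ℝ)) : UnitAddCircle) (s:ℂ)) / (G:ℂ), ?_, ?_⟩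
  · intro s hs
    have h1 : HasSum (fun n : ℕ => (∑ j ∈ Finset.range p, (legendreSym p (j:ℤ) : ℂ) *
      (Real.sin (2 * Real.pi * (c/8 + j/p : ℝ) * n) / (n : ℂ) ^ (s:ℂ))) / (G:ℂ)) 
        ((∑ j ∈ Finset.range p, (legendreSym p (j:ℤ) : ℂ) *
    HurwitzZeta.sinZeta (((c/8 + j/p : ℝ)) : UnitAddCircle) (s:ℂ)) / (G:ℂ)) := by
      apply HasSum.div_const
      apply hasSum_sum
      intro j _
      apply HasSum.mul_left
      exact HurwitzZeta.hasSum_nat_sinZeta _ (by simpa using hs)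
    refine h1.congr_fun fun n => ?_
    have h2 := gl_gauss_sin p G hG (c/8) n
    have h3 := congrArg (fun x : ℝ => (x:ℂ)) h2
    simp only [Complex.ofReal_sum, Complex.ofReal_mul, Complex.ofReal_intCast] at h3
    simp only [← mul_div_assoc, ← Finset.sum_div]
    rw [show (∑ j ∈ Finset.range p, (legendreSym p (j:ℤ) : ℂ) *
      (Real.sin (2 * Real.pi * (c/8 + j/p : ℝ) * n))) = _ from h3]
    have : (G:ℂ) ≠ 0 := by exact_mod_cast hG0
    rw [Complex.ofReal_mul, Complex.ofReal_intCast]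
    field_simp
  · have hcont : Tendsto (fun s : ℝ => (∑ j ∈ Finset.range p, (legendreSym p (j:ℤ) : ℂ) *
        HurwitzZeta.sinZeta (((c/8 + j/p : ℝ)) : UnitAddCircle) (s:ℂ)) / (G:ℂ)) (𝓝[>] 1)
        (𝓝 ((∑ j ∈ Finset.range p, (legendreSym p (j:ℤ) : ℂ) *
        HurwitzZeta.sinZeta (((c/8 + j/p : ℝ)) : UnitAddCircle) 1) / (G:ℂ))) := by
      apply Tendsto.div_const
      apply tendsto_finsetSum
      intro j _
      apply Tendsto.const_mul
      have : Continuous (fun s : ℝ => HurwitzZeta.sinZeta (((c/8 + j/p : ℝ)) : UnitAddCircle) (s:ℂ)) :=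
        (HurwitzZeta.differentiableAt_sinZeta _).continuous.comp Complex.continuous_ofReal
      have := (this.tendsto 1).mono_left (nhdsWithin_le_nhds (s := Set.Ioi 1))
      simpa using this
    convert hcont using 2
    have hterm : ∀ j ∈ Finset.range p, (legendreSym p (j:ℤ) : ℂ) *
        HurwitzZeta.sinZeta (((c/8 + j/p : ℝ)) : UnitAddCircle) 1 =
        ((Real.pi * (1/2 - c/8) * (legendreSym p (j:ℤ)) - Real.pi / p * ((legendreSym p (j:ℤ) * (j:ℤ) : ℤ)) +
          Real.pi * (if p - c * m ≤ j then (legendreSym p (j:ℤ) : ℝ) else 0) : ℝ) : ℂ) := by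
      intro j hj
      have hj' : j < p := Finset.mem_range.mp hj
      have hjp : (j:ℝ) / p < 1 := by rw [div_lt_one hp0]; exact_mod_cast hj'
      have hc8' : (c:ℝ) < 8 := by exact_mod_cast hc8
      have hc0' : (0:ℝ) < c := by exact_mod_cast hc0
      have hj0 : 0 ≤ (j:ℝ) / p := by positivity
      by_cases hle : p - c * m ≤ j
      · have hy : ((c/8 + j/p : ℝ) : UnitAddCircle) = ((c/8 + j/p - 1 : ℝ) : UnitAddCircle) := by
          rw [AddCircle.coe_sub, AddCircle.coe_period, sub_zero]
        have hgt : (1:ℝ) < c/8 + j/p := by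
          have h1 : p ≤ c * m + j := by omega
          have h1' : (8:ℝ) * p < c * p + 8 * j := by
            have : 8 * p < c * p + 8 * j := by
              rw [hm] at h1 ⊢; nlinarith
            exact_mod_cast this
          rw [div_add_div _ _ (by norm_num) hp0.ne', lt_div_iff₀ (by positivity)]
          linarith
        rw [hy, gl_sinZeta_one _ (by linarith) (by linarith), if_pos hle]
        push_cast; ring
      · have hlt : (c/8 + j/p : ℝ) < 1 := by
          have h1 : c * m + j + 1 ≤ p := by omega
          have h1' : c * p + 8 * j < (8:ℝ) * p := by
            have : c * p + 8 * j < 8 * p := by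
              rw [hm] at h1 ⊢; nlinarith
            exact_mod_cast this
          rw [div_add_div _ _ (by norm_num) hp0.ne', div_lt_iff₀ (by positivity)]
          linarith
        rw [gl_sinZeta_one _ (by positivity) hlt, if_neg hle]
        push_cast; ring
    rw [Finset.sum_congr rfl hterm, ← Complex.ofReal_sum, ← Complex.ofReal_div]
    congr 2
    rw [Finset.sum_add_distrib, Finset.sum_sub_distrib, ← Finset.mul_sum, ← Finset.mul_sum, ← Finset.mul_sum,
      ← Finset.sum_filter, ← Int.cast_sum, ← Int.cast_sum, ← Int.cast_sum, gl_total p h8, gl_total_mul p h8]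
    have : Finset.filter (fun j => p - c * m ≤ j) (Finset.range p) = Finset.Ico (p - c*m) p := by
      ext j; simp only [Finset.mem_filter, Finset.mem_range, Finset.mem_Ico]; omega
    rw [this, gl_Ico p h8 (c*m) (by rw [hm]; nlinarith)]
    simp

lemma gl_trace {A B : Type*} [CommRing A] [CommRing B] [Algebra A B] (b : Module.Basis (Fin 2) A B)
    (t : B) (d : A) (h0 : b 0 = 1) (h1 : b 1 = t) (ht : t ^ 2 = -algebraMap A B d) (u v : A) :
    Algebra.trace A B (u • 1 + v • t) = 2 * u := by
  rw [Algebra.trace_eq_matrix_trace b, Matrix.trace_fin_two, Algebra.leftMulMatrix_eq_repr_mul,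
    Algebra.leftMulMatrix_eq_repr_mul, h0, h1, mul_one]
  have e2 : (u • (1:B) + v • t) * t = (-(v * d)) • (1:B) + u • t := by
    simp only [Algebra.smul_def, map_neg, map_mul]
    linear_combination (algebraMap A B v) * ht
  rw [e2, ← h0, ← h1]
  simp
  ring

lemma gl_arith (d : ℕ) (hsq : Squarefree d) (hd : d % 4 = 1 ∨ d % 4 = 2) (u v : ℚ) (A N : ℤ)
    (hA : 2 * u = A) (hN : u ^ 2 + d * v ^ 2 = N) : ∃ a b : ℤ, u = a ∧ v = b := by
  have h1 : (d:ℚ) * (2 * v) ^ 2 = ((4 * N - A ^ 2 : ℤ) : ℚ) := by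
    push_cast; rw [← hA, ← hN]; ring
  have h2 : ∃ B : ℤ, 2 * v = B := by
    set w := 2 * v with hw
    have hden : (w.den : ℚ) ≠ 0 := by exact_mod_cast w.den_ne_zero
    have h3 : (d : ℤ) * w.num ^ 2 = (4 * N - A ^ 2) * (w.den : ℤ) ^ 2 := by
      have : (d:ℚ) * (w.num) ^ 2 = ((4 * N - A ^ 2 : ℤ) : ℚ) * (w.den) ^ 2 := by
        rw [← h1]
        conv_rhs => rw [← Rat.num_div_den w]
        field_simp
        rw [Rat.num_div_den]
      exact_mod_cast this
    have hcop : IsCoprime ((w.den : ℤ) ^ 2) (w.num ^ 2) := by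
      apply IsCoprime.pow
      exact (Int.isCoprime_iff_gcd_eq_one.mpr (by
        have := w.reduced; rw [Nat.Coprime] at this
        rw [Int.gcd, Int.natAbs_natCast, Nat.gcd_comm]; exact this))
    have h4 : ((w.den : ℤ) ^ 2) ∣ (d : ℤ) := hcop.dvd_of_dvd_mul_right ⟨4 * N - A ^ 2, by rw [h3]; ring⟩
    have h5 : w.den * w.den ∣ d := by rw [← pow_two]; exact_mod_cast h4
    have h6 : w.den = 1 := Nat.isUnit_iff.mp (hsq _ h5)
    exact ⟨w.num, (Rat.coe_int_num_of_den_eq_one h6).symm⟩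
  obtain ⟨B, hB⟩ := h2
  have h7 : A ^ 2 + d * B ^ 2 = 4 * N := by
    have : (A:ℚ) ^ 2 + d * B ^ 2 = 4 * N := by rw [← hA, ← hB, ← hN]; ring
    exact_mod_cast this
  have h8 : A % 2 = 0 ∧ B % 2 = 0 := by
    have hd' : ∃ k : ℤ, (d:ℤ) = 4 * k + 1 ∨ (d:ℤ) = 4 * k + 2 := ⟨d / 4, by omega⟩
    obtain ⟨k, hk⟩ := hd'
    rcases Int.emod_two_eq_zero_or_one A with ha | ha <;>
      rcases Int.emod_two_eq_zero_or_one B with hb | hb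
    · exact ⟨ha, hb⟩
    all_goals
      exfalso
      obtain ⟨x, hx⟩ : ∃ x, A = 2 * x + A % 2 := ⟨A / 2, by omega⟩
      obtain ⟨y, hy⟩ : ∃ y, B = 2 * y + B % 2 := ⟨B / 2, by omega⟩
      rw [ha] at hx; rw [hb] at hy
      rcases hk with hk | hk <;>
      · rw [hk, hx, hy] at h7
        ring_nf at h7
        omega
  obtain ⟨⟨x, hx⟩, ⟨y, hy⟩⟩ := And.intro (Int.dvd_of_emod_eq_zero h8.1) (Int.dvd_of_emod_eq_zero h8.2)
  refine ⟨x, y, ?_, ?_⟩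
  · rw [hx] at hA; push_cast at hA; linarith
  · rw [hy] at hB; push_cast at hB; linarith

section
open NumberField

lemma gl_field (d : ℕ) (hd0 : 0 < d) (K : Type) [Field K] [NumberField K]
    (θ : K) (hθ : θ ^ 2 = -(d : K)) (hgen : Algebra.adjoin ℚ {θ} = ⊤) :
    ∃ b : Module.Basis (Fin 2) ℚ K, b 0 = 1 ∧ b 1 = θ := by
  have hli : LinearIndependent ℚ ![1, θ] := by
    rw [LinearIndependent.pair_iff]
    intro s t hst
    have h1 : (s:K) = -(t * θ) := by
      rw [Rat.smul_def, Rat.smul_def] at hst; linear_combination hst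
    have h2 : ((s^2 + d * t^2 : ℚ) : K) = 0 := by
      push_cast; rw [h1]; linear_combination t^2 * hθ
    have h3 : s ^ 2 + d * t ^ 2 = 0 := by exact_mod_cast h2
    have hd : (0:ℚ) < d := by exact_mod_cast hd0
    have ht : t = 0 := by
      by_contra h
      have := sq_nonneg s
      have : 0 < d * t^2 := by positivity
      linarith
    subst ht
    exact ⟨by simpa using h3, rfl⟩
  have hsp : ⊤ ≤ Submodule.span ℚ (Set.range ![1, θ]) := by
    intro x _
    have hx : x ∈ Algebra.adjoin ℚ {θ} := by rw [hgen]; trivial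
    simp only [Matrix.range_cons, Matrix.range_empty, Set.union_empty, Set.singleton_union]
    rw [Submodule.mem_span_pair]
    induction hx using Algebra.adjoin_induction with
    | mem x hx => rw [Set.mem_singleton_iff] at hx; exact ⟨0, 1, by simp [hx]⟩
    | algebraMap r => exact ⟨r, 0, by simp [Algebra.smul_def]⟩
    | add x y _ _ hx hy =>
      obtain ⟨a, b, rfl⟩ := hx trivial
      obtain ⟨a', b', rfl⟩ := hy trivial
      exact ⟨a + a', b + b', by simp only [add_smul]; abel⟩
    | mul x y _ _ hx hy =>
      obtain ⟨a, b, rfl⟩ := hx trivial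
      obtain ⟨a', b', rfl⟩ := hy trivial
      refine ⟨a * a' - d * b * b', a * b' + b * a', ?_⟩
      simp only [Rat.smul_def]; push_cast
      linear_combination -(b:K) * b' * hθ
  refine ⟨Module.Basis.mk hli hsp, ?_, ?_⟩ <;> simp

lemma gl_int (d : ℕ) (hd0 : 0 < d) (hsq : Squarefree d) (hd : d % 4 = 1 ∨ d % 4 = 2)
    (K : Type) [Field K] [NumberField K]
    (θ : K) (hθ : θ ^ 2 = -(d : K)) (hgen : Algebra.adjoin ℚ {θ} = ⊤) :
    ∃ t : 𝓞 K, t ^ 2 = -(d : 𝓞 K) ∧ ∀ x : 𝓞 K, ∃ a b : ℤ, x = a + b * t := by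
  have hint : IsIntegral ℤ θ := by
    apply IsIntegral.of_pow (n := 2) (by norm_num)
    rw [hθ]
    exact (isIntegral_natCast (R := ℤ) (a := d)).neg
  obtain ⟨b, hb0, hb1⟩ := gl_field d hd0 K θ hθ hgen
  obtain ⟨t, rfl⟩ : ∃ t : 𝓞 K, (t : K) = θ := ⟨⟨θ, hint⟩, rfl⟩
  refine ⟨t, ?_, ?_⟩
  · apply RingOfIntegers.ext; simpa using hθ
  · intro x
    have hx : IsIntegral ℤ (x : K) := x.2
    obtain ⟨u, v, huv⟩ : ∃ u v : ℚ, (x : K) = u • (1:K) + v • (t:K) := by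
      refine ⟨b.repr (x:K) 0, b.repr (x:K) 1, ?_⟩
      conv_lhs => rw [← b.sum_repr (x:K)]
      rw [Fin.sum_univ_two, hb0, hb1]
    have htr : Algebra.trace ℚ K (x:K) = 2 * u := by
      rw [huv]; exact gl_trace b (t:K) (d:ℚ) hb0 hb1 (by simpa using hθ) u v
    have hi1 := Algebra.isIntegral_trace (L := ℚ) hx
    rw [htr] at hi1
    obtain ⟨A, hA⟩ := IsIntegrallyClosed.isIntegral_iff.mp hi1
    have hi2 : IsIntegral ℤ ((u^2 + d * v^2 : ℚ) : K) := by
      have : ((u^2 + d * v^2 : ℚ) : K) = (A : K) * x - x * x := by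
        have h3 : (A:K) = 2 * u := by
          have : ((A:ℚ):K) = ((2 * u : ℚ) : K) := by rw [← hA]; simp
          push_cast at this; exact this
        rw [h3, huv, Rat.smul_def, Rat.smul_def]; push_cast
        linear_combination (v:K)^2 * hθ
      rw [this]
      exact ((isIntegral_intCast (R := ℤ) (n := A)).mul hx).sub (hx.mul hx)
    have hi3 : IsIntegral ℤ (u^2 + d * v^2 : ℚ) := by
      rw [← isIntegral_algebraMap_iff (B := K) (algebraMap ℚ K).injective]
      simpa using hi2
    obtain ⟨N, hN⟩ := IsIntegrallyClosed.isIntegral_iff.mp hi3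
    obtain ⟨a, c, ha, hc⟩ := gl_arith d hsq hd u v A N (by rw [← hA]; simp) (by rw [← hN]; simp)
    refine ⟨a, c, ?_⟩
    apply RingOfIntegers.ext
    rw [huv, ha, hc]
    simp [Rat.smul_def]

lemma gl_uniq {R : Type*} [CommRing R] [IsDomain R] [CharZero R] (d : ℕ) (hd0 : 0 < d) (t : R)
    (ht : t ^ 2 = -(d : R)) (a b : ℤ) (h : (a:R) + b * t = 0) : a = 0 ∧ b = 0 := by
  have h1 : ((a^2 + d * b^2 : ℤ) : R) = 0 := by
    push_cast; linear_combination (a - b * t) * h + b^2 * ht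
  have h2 : a^2 + d * b^2 = 0 := by exact_mod_cast h1
  have hd : (0:ℤ) < d := by exact_mod_cast hd0
  have hb : b = 0 := by
    by_contra h
    have := sq_nonneg a
    have : 0 < d * b^2 := by positivity
    linarith
  subst hb
  exact ⟨by simpa using h2, rfl⟩

lemma gl_uniq' {R : Type*} [CommRing R] [IsDomain R] [CharZero R] (d : ℕ) (hd0 : 0 < d) (t : R)
    (ht : t ^ 2 = -(d : R)) (a b a' b' : ℤ) (h : (a:R) + b * t = a' + b' * t) : a = a' ∧ b = b' := by
  have := gl_uniq d hd0 t ht (a - a') (b - b') (by push_cast; linear_combination h)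
  omega

lemma gl_invariants (d : ℕ) (hd2 : 2 ≤ d) 
    (K : Type) [Field K] [NumberField K] (t : 𝓞 K) (ht : t ^ 2 = -(d : 𝓞 K))
    (hrep : ∀ x : 𝓞 K, ∃ a b : ℤ, x = a + b * t) :
    Module.finrank ℤ (𝓞 K) = 2 ∧ 
    dedekindZeta_residue K = Real.pi * classNumber K / (2 * √d) := by
  have hd0 : 0 < d := by omega
  have hli : LinearIndependent ℤ ![1, t] := by
    rw [LinearIndependent.pair_iff]
    intro s r h
    exact gl_uniq d hd0 t ht s r (by simpa [zsmul_eq_mul] using h)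
  have hsp : ⊤ ≤ Submodule.span ℤ (Set.range ![1, t]) := by
    intro x _
    simp only [Matrix.range_cons, Matrix.range_empty, Set.union_empty, Set.singleton_union]
    rw [Submodule.mem_span_pair]
    obtain ⟨a, b, h⟩ := hrep x
    exact ⟨a, b, by rw [h]; simp [zsmul_eq_mul]⟩
  obtain ⟨b, hb0, hb1⟩ : ∃ b : Module.Basis (Fin 2) ℤ (𝓞 K), b 0 = 1 ∧ b 1 = t :=
    ⟨Module.Basis.mk hli hsp, by simp, by simp⟩
  have hfr : Module.finrank ℤ (𝓞 K) = 2 := by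
    rw [Module.finrank_eq_card_basis b]; simp
  refine ⟨hfr, ?_⟩
  have htr := gl_trace b t (d:ℤ) hb0 hb1 (by simpa using ht)
  have hdisc : discr K = -4 * d := by
    rw [← discr_eq_discr K b, Algebra.discr_def, Matrix.det_fin_two]
    simp only [Algebra.traceMatrix_apply, Algebra.traceForm_apply, hb0, hb1]
    have e1 := htr 1 0
    have e2 := htr 0 1
    have e3 := htr (-d) 0
    simp only [one_smul, zero_smul, add_zero, zero_add] at e1 e2 e3
    rw [show t * t = (-(d:ℤ)) • (1 : 𝓞 K) by rw [← pow_two, ht]; simp [zsmul_eq_mul], one_mul, mul_one, one_mul,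
      e1, e2, e3]
    ring
  have hfrK : Module.finrank ℚ K = 2 := by rw [← RingOfIntegers.rank, hfr]
  have hr1 : InfinitePlace.nrRealPlaces K = 0 := by
    classical
    rw [← InfinitePlace.card_real_embeddings, Fintype.card_eq_zero_iff]
    refine ⟨fun ⟨φ, hφ⟩ => ?_⟩
    have h1 : (hφ.embedding (t:K)) ^ 2 = -(d:ℝ) := by
      rw [← map_pow, show ((t:K))^2 = -(d:K) by
        have := congrArg (fun x : 𝓞 K => (x : K)) ht
        simpa using this]
      simp
    have h2 := sq_nonneg (hφ.embedding (t:K))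
    have h3 : (0:ℝ) < d := by exact_mod_cast hd0
    linarith
  have hr2 : InfinitePlace.nrComplexPlaces K = 1 := by
    have := InfinitePlace.card_add_two_mul_card_eq_rank K
    omega
  have hcard : Fintype.card (InfinitePlace K) = 1 := by
    rw [InfinitePlace.card_eq_nrRealPlaces_add_nrComplexPlaces, hr1, hr2]
  have hreg : Units.regulator K = 1 := by
    classical
    rw [Units.regulator_eq_det']
    have : IsEmpty {w : InfinitePlace K // w ≠ Units.dirichletUnitTheorem.w₀} :=
      ⟨fun w => w.2 ((Fintype.card_le_one_iff_subsingleton.mp hcard.le).elim _ _)⟩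
    rw [Matrix.det_isEmpty, abs_one]
  have hunits : ∀ u : (𝓞 K)ˣ, u = 1 ∨ u = -1 := by
    intro u
    obtain ⟨a, b, h1⟩ := hrep u
    obtain ⟨a', b', h2⟩ := hrep (u⁻¹ : (𝓞 K)ˣ)
    have h3 : (u : 𝓞 K) * (u⁻¹ : (𝓞 K)ˣ) = 1 := by simp
    rw [h1, h2] at h3
    have h4 := gl_uniq' d hd0 t ht (a * a' - d * b * b') (a * b' + b * a') 1 0 (by
      push_cast; linear_combination h3 - b * b' * ht)
    have h5 : (a^2 + d * b^2) * (a'^2 + d * b'^2) = 1 := by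
      have : (a^2 + d * b^2) * (a'^2 + d * b'^2) = (a * a' - d * b * b')^2 + d * (a * b' + b * a')^2 := by ring
      rw [this, h4.1, h4.2]; ring
    have h6 : a^2 + d * b^2 = 1 := by
      have hn : 0 ≤ a^2 + d * b^2 := by positivity
      rcases Int.eq_one_or_neg_one_of_mul_eq_one h5 with h | h <;> omega
    have hb : b = 0 := by
      by_contra hb
      have : 1 ≤ b^2 := by have : 0 < b^2 := by positivity
                           omega
      have h8 : (2:ℤ) ≤ d := by exact_mod_cast hd2
      nlinarith [sq_nonneg a]
    subst hb
    have ha : a = 1 ∨ a = -1 := by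
      have : a^2 = 1 := by simpa using h6
      exact mul_self_eq_one_iff.mp (by rw [← pow_two]; exact this)
    rcases ha with rfl | rfl
    · left; ext; rw [h1]; simp
    · right; ext; rw [h1]; simp
  have htor : Units.torsionOrder K = 2 := by
    have h1 := Units.even_torsionOrder K
    have h2 := Units.torsionOrder_pos K
    have h3 : Units.torsionOrder K ≤ 2 := by
      classical
      have hinj : Function.Injective (fun u : Units.torsion K => decide ((u : (𝓞 K)ˣ) = 1)) := by
        intro u v huv
        simp only [decide_eq_decide] at huv
        ext1
        rcases hunits u with h | h <;> rcases hunits v with h' | h'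
        · rw [h, h']
        · rw [h, ← huv.mp h]
        · rw [h', huv.mpr h']
        · rw [h, h']
      have := Nat.card_le_card_of_injective _ hinj
      rw [Units.torsionOrder]
      simpa using this
    obtain ⟨k, hk⟩ := h1
    omega
  rw [dedekindZeta_residue_def, hr1, hr2, hreg, htor, hdisc]
  have : √|((-4 * d : ℤ) : ℝ)| = 2 * √d := by
    rw [show |((-4 * d : ℤ) : ℝ)| = 2^2 * d by
      push_cast; rw [abs_mul]; norm_num]
    rw [Real.sqrt_mul (by positivity), Real.sqrt_sq (by norm_num)]
  rw [this]
  push_cast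
  have : (0:ℝ) < √d := Real.sqrt_pos.mpr (by exact_mod_cast hd0)
  field_simp
end

set_option linter.unusedSectionVars false
section
open Ideal

variable {R : Type*} [CommRing R] [IsDedekindDomain R] [CharZero R]
  [Module.Free ℤ R] [Module.Finite ℤ R]

noncomputable def glA (R : Type*) [CommRing R] [IsDedekindDomain R]
  [Module.Free ℤ R] (n : ℕ) : ℕ := Nat.card {I : Ideal R // absNorm I = n}

lemma gl_mem_of_norm (I : Ideal R) (n : ℕ) (h : absNorm I = n) : span {(n:R)} ≤ I := by
  rw [← h]; exact span_singleton_absNorm_le I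

lemma gl_cop (m n : ℕ) (h : m.Coprime n) : span {(m:R)} ⊔ span {(n:R)} = ⊤ := by
  have h1 : IsCoprime (m:ℤ) (n:ℤ) := Nat.isCoprime_iff_coprime.mpr h
  obtain ⟨a, b, hab⟩ := h1
  rw [Ideal.eq_top_iff_one]
  have : (1:R) = a * m + b * n := by exact_mod_cast congrArg (fun x : ℤ => (x:R)) hab.symm
  rw [this]
  exact Submodule.add_mem_sup (Ideal.mul_mem_left _ _ (mem_span_singleton_self _))
    (Ideal.mul_mem_left _ _ (mem_span_singleton_self _))

lemma gl_recover (m n : ℕ) (h : m.Coprime n) (I J : Ideal R) (hI : absNorm I = m) (hJ : absNorm J = n) :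
    I * J ⊔ span {(m:R)} = I := by
  have hm := gl_mem_of_norm I m hI
  have hn := gl_mem_of_norm J n hJ
  apply le_antisymm
  · exact sup_le Ideal.mul_le_left hm
  · have ht : J ⊔ span {(m:R)} = ⊤ := by
      rw [eq_top_iff, ← gl_cop m n h, sup_comm]
      exact sup_le_sup_right hn _
    calc I = I * (J ⊔ span {(m:R)}) := by rw [ht, Ideal.mul_top]
      _ = I * J ⊔ I * span {(m:R)} := Ideal.mul_sup _ _ _
      _ ≤ _ := sup_le_sup_left Ideal.mul_le_right _

lemma glA_mul (m n : ℕ) (hm0 : m ≠ 0) (hn0 : n ≠ 0) (h : m.Coprime n) : glA R (m * n) = glA R m * glA R n := by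
  unfold glA
  rw [← Nat.card_prod]
  symm
  apply Nat.card_congr
  refine Equiv.ofBijective (fun x => ⟨x.1.1 * x.2.1, by rw [map_mul, x.1.2, x.2.2]⟩) ⟨?_, ?_⟩
  · rintro ⟨⟨I, hI⟩, ⟨J, hJ⟩⟩ ⟨⟨I', hI'⟩, ⟨J', hJ'⟩⟩ hx
    have hx : I * J = I' * J' := congrArg Subtype.val hx
    have h1 : I = I' := by
      rw [← gl_recover m n h I J hI hJ, ← gl_recover m n h I' J' hI' hJ', hx]
    have h2 : J = J' := by
      rw [← gl_recover n m h.symm J I hJ hI, ← gl_recover n m h.symm J' I' hJ' hI', mul_comm J I, mul_comm J' I', hx]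
    subst h1; subst h2; rfl
  · rintro ⟨L, hL⟩
    have hmn := gl_mem_of_norm L _ hL
    set I := L ⊔ span {(m:R)} with hI
    set J := L ⊔ span {(n:R)} with hJ
    have hIJ : I ⊔ J = ⊤ := by
      rw [eq_top_iff, ← gl_cop m n h]
      exact sup_le_sup le_sup_right le_sup_right
    have hprod : I * J = L := by
      apply le_antisymm
      · rw [hI, hJ, Ideal.sup_mul, Ideal.mul_sup, Ideal.mul_sup]
        refine sup_le (sup_le Ideal.mul_le_left Ideal.mul_le_left) (sup_le Ideal.mul_le_right ?_)
        rw [Ideal.span_singleton_mul_span_singleton]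
        exact_mod_cast hmn
      · rw [Ideal.mul_eq_inf_of_coprime hIJ]
        exact le_inf le_sup_left le_sup_left
    have hN : absNorm I * absNorm J = m * n := by rw [← map_mul, hprod, hL]
    have h1 : absNorm I ∣ m := by
      have : absNorm I ∣ m ^ Module.finrank ℤ R := by
        rw [← absNorm_span_natCast]; exact absNorm_dvd_absNorm_of_le le_sup_right
      have hc : (absNorm I).Coprime n := (h.pow_left _).coprime_dvd_left this
      exact hc.dvd_of_dvd_mul_right ⟨_, hN.symm⟩
    have h2 : absNorm J ∣ n := by
      have : absNorm J ∣ n ^ Module.finrank ℤ R := by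
        rw [← absNorm_span_natCast]; exact absNorm_dvd_absNorm_of_le le_sup_right
      have hc : (absNorm J).Coprime m := (h.symm.pow_left _).coprime_dvd_left this
      exact hc.dvd_of_dvd_mul_left ⟨absNorm I, by rw [← hN]; ring⟩
    have h3 : absNorm I = m := by
      obtain ⟨x, hx⟩ := h1
      obtain ⟨y, hy⟩ := h2
      have hI0 : absNorm I ≠ 0 := by intro h0; rw [h0] at hx; omega
      have hJ0 : absNorm J ≠ 0 := by intro h0; rw [h0] at hy; omega
      have hxy : x * y = 1 := by
        have : absNorm I * absNorm J * (x * y) = absNorm I * absNorm J * 1 := by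
          calc absNorm I * absNorm J * (x * y) = (absNorm I * x) * (absNorm J * y) := by ring
            _ = _ := by rw [← hx, ← hy, mul_one, hN]
        exact Nat.eq_of_mul_eq_mul_left (by positivity) this
      have := Nat.eq_one_of_mul_eq_one_right hxy
      rw [this, mul_one] at hx; exact hx.symm
    have h4 : absNorm J = n := by
      rw [h3] at hN; exact Nat.eq_of_mul_eq_mul_left (by omega) hN
    exact ⟨⟨⟨I, h3⟩, ⟨J, h4⟩⟩, Subtype.ext hprod⟩

lemma gl_dvd_pow (q k : ℕ) (I : Ideal R) (h : absNorm I = q ^ k) : I ∣ span {(q:R)} ^ k := by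
  rw [Ideal.dvd_iff_le, Ideal.span_singleton_pow]
  have := gl_mem_of_norm I _ h
  exact_mod_cast this

lemma glA_inert (hfr : Module.finrank ℤ R = 2) (q k : ℕ) (hq : q.Prime)
    (hP : (span {(q:R)}).IsPrime) : glA R (q ^ k) = if Even k then 1 else 0 := by
  have hq0 : (q:R) ≠ 0 := by exact_mod_cast hq.ne_zero
  have hpr : Prime (span {(q:R)}) := Ideal.prime_of_isPrime (by simpa using hq0) hP
  have hN : ∀ i, absNorm (span {(q:R)} ^ i) = q ^ (2 * i) := by
    intro i; rw [map_pow, absNorm_span_natCast, hfr, pow_mul]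
  have key : ∀ I : Ideal R, absNorm I = q ^ k → ∃ i, 2 * i = k ∧ I = span {(q:R)} ^ i := by
    intro I hI
    obtain ⟨i, _, hi⟩ := (dvd_prime_pow hpr k).mp (gl_dvd_pow q k I hI)
    rw [associated_iff_eq] at hi
    refine ⟨i, ?_, hi⟩
    rw [hi, hN] at hI
    exact Nat.pow_right_injective hq.two_le hI
  unfold glA
  split_ifs with he
  · obtain ⟨j, hj⟩ := he
    rw [Nat.card_eq_one_iff_unique]
    refine ⟨⟨fun ⟨I, hI⟩ ⟨J, hJ⟩ => ?_⟩, ⟨⟨span {(q:R)} ^ j, by rw [hN, hj]; ring_nf⟩⟩⟩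
    obtain ⟨i, hi, rfl⟩ := key I hI
    obtain ⟨i', hi', rfl⟩ := key J hJ
    have : i = i' := by omega
    subst this; rfl
  · rw [Nat.card_eq_zero]; left
    refine ⟨fun ⟨I, hI⟩ => ?_⟩
    obtain ⟨i, hi, rfl⟩ := key I hI
    exact he ⟨i, by omega⟩

lemma gl_prime_of_norm (q : ℕ) (hq : q.Prime) (P : Ideal R) (h : absNorm P = q) : Prime P := by
  apply Ideal.prime_of_isPrime
  · intro h0; rw [h0, absNorm_bot] at h; exact hq.ne_zero h.symm
  · apply isPrime_of_irreducible_absNorm; rw [h]; exact hq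

lemma glA_ram (hfr : Module.finrank ℤ R = 2) (q k : ℕ) (hq : q.Prime)
    (P : Ideal R) (hP : P ^ 2 = span {(q:R)}) : glA R (q ^ k) = 1 := by
  have hNP : absNorm P = q := by
    have : (absNorm P) ^ 2 = q ^ 2 := by rw [← map_pow, hP, absNorm_span_natCast, hfr]
    exact Nat.pow_left_injective (n := 2) (by norm_num) this
  have hpr := gl_prime_of_norm q hq P hNP
  have key : ∀ I : Ideal R, absNorm I = q ^ k → I = P ^ k := by
    intro I hI
    have h1 := gl_dvd_pow q k I hI
    rw [← hP, ← pow_mul] at h1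
    obtain ⟨i, _, hi⟩ := (dvd_prime_pow hpr _).mp h1
    rw [associated_iff_eq] at hi
    rw [hi, map_pow, hNP] at hI
    rw [hi, Nat.pow_right_injective hq.two_le hI]
  unfold glA
  rw [Nat.card_eq_one_iff_unique]
  refine ⟨⟨fun ⟨I, hI⟩ ⟨J, hJ⟩ => ?_⟩, ⟨⟨P ^ k, by rw [map_pow, hNP]⟩⟩⟩
  have h1 := key I hI
  have h2 := key J hJ
  subst h1; subst h2; rfl

lemma glA_split (hfr : Module.finrank ℤ R = 2) (q k : ℕ) (hq : q.Prime)
    (P Q : Ideal R) (hPQ : P * Q = span {(q:R)}) (hne : P ≠ Q) (hP1 : P ≠ ⊤) (hQ1 : Q ≠ ⊤) :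
    glA R (q ^ k) = k + 1 := by
  have hNN : absNorm P * absNorm Q = q * q := by
    rw [← map_mul, hPQ, absNorm_span_natCast, hfr, pow_two]
  have hN1 : absNorm P ≠ 1 := by rwa [Ne, absNorm_eq_one_iff]
  have hN2 : absNorm Q ≠ 1 := by rwa [Ne, absNorm_eq_one_iff]
  obtain ⟨hNP, hNQ⟩ : absNorm P = q ∧ absNorm Q = q := by
    have hd : absNorm P ∣ q ^ 2 := ⟨absNorm Q, by rw [hNN, pow_two]⟩
    obtain ⟨i, hi, h⟩ := (Nat.dvd_prime_pow hq).mp hd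
    have hi : i = 0 ∨ i = 1 ∨ i = 2 := by omega
    rcases hi with rfl | rfl | rfl
    · simp at h; exact absurd (by simpa using h) hP1
    · rw [pow_one] at h
      rw [h] at hNN
      exact ⟨h, Nat.eq_of_mul_eq_mul_left hq.pos hNN⟩
    · rw [h, pow_two] at hNN
      have : absNorm Q = 1 := Nat.eq_of_mul_eq_mul_left (Nat.mul_pos hq.pos hq.pos) (by rw [hNN, mul_one])
      exact absurd this hN2
  have hpP := gl_prime_of_norm q hq P hNP
  have hpQ := gl_prime_of_norm q hq Q hNQ
  have hndvd : ∀ n, ¬ P ∣ Q ^ n := by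
    intro n h
    have h1 := hpP.dvd_of_dvd_pow h
    have := (hpP.associated_of_dvd hpQ h1)
    exact hne (associated_iff_eq.mp this)
  have hcancel : ∀ i j i' j' : ℕ, i < i' → P ^ i * Q ^ j = P ^ i' * Q ^ j' → False := by
    intro i j i' j' hlt h
    have e : P ^ i' = P ^ i * P ^ (i' - i) := by rw [← pow_add]; congr 1; omega
    rw [e, mul_assoc] at h
    have h2 := mul_left_cancel₀ (pow_ne_zero i hpP.ne_zero) h
    refine hndvd j ?_
    rw [h2]
    exact Dvd.dvd.mul_right (dvd_pow_self P (by omega)) _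
  unfold glA
  rw [← Nat.card_fin (k+1)]
  symm
  apply Nat.card_congr
  refine Equiv.ofBijective (fun i => ⟨P ^ (i:ℕ) * Q ^ (k - (i:ℕ)), by
    rw [map_mul, map_pow, map_pow, hNP, hNQ, ← pow_add]; congr 1; omega⟩) ⟨?_, ?_⟩
  · intro i i' h
    have h := congrArg Subtype.val h
    simp only at h
    rcases lt_trichotomy (i:ℕ) i' with hl | hl | hl
    · exact (hcancel _ _ _ _ hl h).elim
    · exact Fin.ext hl
    · exact (hcancel _ _ _ _ hl h.symm).elim
  · rintro ⟨I, hI⟩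
    have h1 := gl_dvd_pow q k I hI
    rw [← hPQ, mul_pow] at h1
    obtain ⟨a, b, ha, hb, hab⟩ := exists_dvd_and_dvd_of_dvd_mul h1
    obtain ⟨i, _, hi⟩ := (dvd_prime_pow hpP _).mp ha
    obtain ⟨j, _, hj⟩ := (dvd_prime_pow hpQ _).mp hb
    rw [associated_iff_eq] at hi hj
    rw [hab, hi, hj, map_mul, map_pow, map_pow, hNP, hNQ, ← pow_add] at hI
    have hk := Nat.pow_right_injective hq.two_le hI
    refine ⟨⟨i, by omega⟩, Subtype.ext ?_⟩
    simp only
    rw [hab, hi, hj]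
    congr 2; omega

lemma gl_count (hfr : Module.finrank ℤ R = 2) (X : ℕ → ℤ) (hX1 : X 1 = 1)
    (hXmul : ∀ m n, X (m * n) = X m * X n)
    (hX : ∀ q : ℕ, q.Prime →
      (X q = 0 ∧ ∃ P : Ideal R, P ^ 2 = span {(q:R)}) ∨
      (X q = 1 ∧ ∃ P Q : Ideal R, P * Q = span {(q:R)} ∧ P ≠ Q ∧ P ≠ ⊤ ∧ Q ≠ ⊤) ∨
      (X q = -1 ∧ (span {(q:R)}).IsPrime)) (n : ℕ) (hn : n ≠ 0) :
    (glA R n : ℤ) = ∑ e ∈ n.divisors, X e := by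
  let f : ArithmeticFunction ℤ := ⟨fun n => if n = 0 then 0 else (glA R n : ℤ), by simp⟩
  let g : ArithmeticFunction ℤ := ⟨fun n => if n = 0 then 0 else X n, by simp⟩
  have hf : ∀ n, n ≠ 0 → f n = glA R n := fun n hn => by simp [f, hn]
  have hg : ∀ n, n ≠ 0 → g n = X n := fun n hn => by simp [g, hn]
  have hA1 : glA R 1 = 1 := by
    unfold glA
    rw [Nat.card_eq_one_iff_unique]
    refine ⟨⟨fun ⟨I, hI⟩ ⟨J, hJ⟩ => ?_⟩, ⟨⟨⊤, absNorm_top⟩⟩⟩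
    rw [absNorm_eq_one_iff] at hI hJ
    subst hI; subst hJ; rfl
  have hfm : f.IsMultiplicative := by
    rw [ArithmeticFunction.IsMultiplicative.iff_ne_zero]
    refine ⟨by rw [hf 1 one_ne_zero, hA1]; simp, fun {m n} hm hn h => ?_⟩
    rw [hf _ (mul_ne_zero hm hn), hf _ hm, hf _ hn, glA_mul m n hm hn h]; simp
  have hgm : g.IsMultiplicative := by
    rw [ArithmeticFunction.IsMultiplicative.iff_ne_zero]
    refine ⟨by rw [hg 1 one_ne_zero, hX1], fun {m n} hm hn h => ?_⟩
    rw [hg _ (mul_ne_zero hm hn), hg _ hm, hg _ hn, hXmul]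
  have hsum : ∀ n, n ≠ 0 → ((ArithmeticFunction.zeta : ArithmeticFunction ℤ) * g) n = ∑ e ∈ n.divisors, X e := by
    intro n hn
    rw [ArithmeticFunction.coe_zeta_mul_apply]
    refine Finset.sum_congr rfl fun e he => hg e ?_
    exact (Nat.pos_of_mem_divisors he).ne'
  have hXpow : ∀ q i, X (q ^ i) = X q ^ i := by
    intro q i
    induction i with
    | zero => simp [hX1]
    | succ i ih => rw [pow_succ, hXmul, ih, pow_succ]
  have main : f = (ArithmeticFunction.zeta : ArithmeticFunction ℤ) * g := by
    rw [hfm.eq_iff_eq_on_prime_powers f _ (ArithmeticFunction.isMultiplicative_zeta.natCast.mul hgm)]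
    intro q k hq
    have hqk : q ^ k ≠ 0 := pow_ne_zero _ hq.ne_zero
    rw [hsum _ hqk, hf _ hqk, Nat.sum_divisors_prime_pow hq]
    simp only [hXpow]
    rcases hX q hq with ⟨h, P, hP⟩ | ⟨h, P, Q, h1, h2, h3, h4⟩ | ⟨h, hP⟩
    · rw [glA_ram hfr q k hq P hP, h, Finset.sum_range_succ']
      simp
    · rw [glA_split hfr q k hq P Q h1 h2 h3 h4, h]
      simp
    · rw [glA_inert hfr q k hq hP, h, neg_one_geom_sum]
      by_cases hk : Even k
      · rw [if_pos hk, if_neg (by rw [Nat.even_add_one]; simpa using hk)]; simp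
      · rw [if_neg hk, if_pos (by rw [Nat.even_add_one]; exact hk)]; simp
  rw [← hsum n hn, ← main, hf n hn]

end

section
open Ideal

variable {R : Type*} [CommRing R] [IsDomain R] [CharZero R]

lemma gl_ram1 (d q : ℕ) (t : R) (ht : t ^ 2 = -(d : R)) (hsq : Squarefree d) (hqd : q ∣ d) :
    ∃ P : Ideal R, P ^ 2 = span {(q:R)} := by
  obtain ⟨e, rfl⟩ := hqd
  have hcop : IsCoprime (q:ℤ) (e:ℤ) := Nat.isCoprime_iff_coprime.mpr (Nat.coprime_of_squarefree_mul hsq)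
  obtain ⟨x, y, hxy⟩ := hcop
  have hxy' : (x:R) * q + y * e = 1 := by exact_mod_cast congrArg (fun x : ℤ => (x:R)) hxy
  refine ⟨span {(q:R), t}, le_antisymm ?_ ?_⟩
  · rw [pow_two, Ideal.span_pair_mul_span_pair, Ideal.span_le]
    push_cast at ht
    intro z hz
    simp only [Set.mem_insert_iff, Set.mem_singleton_iff] at hz
    rw [SetLike.mem_coe, Ideal.mem_span_singleton]
    rcases hz with rfl | rfl | rfl | rfl
    · exact ⟨q, rfl⟩
    · exact ⟨t, rfl⟩
    · exact ⟨t, mul_comm _ _⟩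
    · exact ⟨-e, by linear_combination ht⟩
  · rw [Ideal.span_singleton_le_iff_mem, pow_two]
    have h1 : (q:R) = x * (q * q) - y * (t * t) := by
      push_cast at ht
      linear_combination -(q:R) * hxy' + y * ht
    have hq : (q:R) ∈ span {(q:R), t} := Ideal.subset_span (by simp)
    have htm : t ∈ span {(q:R), t} := Ideal.subset_span (by simp)
    have hmem := sub_mem (Ideal.mul_mem_left _ (x:R) (Ideal.mul_mem_mul hq hq)) (Ideal.mul_mem_left _ (y:R) (Ideal.mul_mem_mul htm htm))
    rwa [← h1] at hmem

lemma gl_ram2 (d : ℕ) (t : R) (ht : t ^ 2 = -(d : R)) (hd : d % 4 = 1) :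
    ∃ P : Ideal R, P ^ 2 = span {((2:ℕ):R)} := by
  obtain ⟨k, rfl⟩ : ∃ k, d = 4 * k + 1 := ⟨d / 4, by omega⟩
  push_cast at ht
  refine ⟨span {(2:R), 1 + t}, le_antisymm ?_ ?_⟩
  · rw [pow_two, Ideal.span_pair_mul_span_pair, Ideal.span_le]
    intro z hz
    simp only [Set.mem_insert_iff, Set.mem_singleton_iff] at hz
    rw [SetLike.mem_coe, Ideal.mem_span_singleton]
    push_cast
    rcases hz with rfl | rfl | rfl | rfl
    · exact ⟨2, rfl⟩
    · exact ⟨1 + t, rfl⟩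
    · exact ⟨1 + t, mul_comm _ _⟩
    · exact ⟨t - 2 * k, by linear_combination ht⟩
  · rw [Ideal.span_singleton_le_iff_mem, pow_two]
    have h1 : ((2:ℕ):R) = 2 * (1 + t) - (1 + t) * (1 + t) - k * (2 * 2) := by
      push_cast
      linear_combination ht
    rw [h1]
    have hq : (2:R) ∈ span {(2:R), 1 + t} := Ideal.subset_span (by simp)
    have htm : 1 + t ∈ span {(2:R), 1 + t} := Ideal.subset_span (by simp)
    exact sub_mem (sub_mem (Ideal.mul_mem_mul hq htm) (Ideal.mul_mem_mul htm htm))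
      (Ideal.mul_mem_left _ _ (Ideal.mul_mem_mul hq hq))

lemma gl_not_mem (d : ℕ) (hd0 : 0 < d) (t : R) (ht : t ^ 2 = -(d : R)) 
    (hrep : ∀ x : R, ∃ a b : ℤ, x = a + b * t) (q : ℕ) (hq : q.Prime) (b c : ℤ) (hc : c = 1 ∨ c = -1) :
    (b : R) + c * t ∉ span {(q:R)} := by
  rw [Ideal.mem_span_singleton]
  rintro ⟨z, hz⟩
  obtain ⟨x, y, rfl⟩ := hrep z
  have := gl_uniq' d hd0 t ht b c (q * x) (q * y) (by push_cast; linear_combination hz)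
  have h1 : (q:ℤ) ∣ c := ⟨y, this.2⟩
  have h2 : (q:ℤ) ∣ 1 := by rcases hc with rfl | rfl <;> simpa using h1
  have h3 : q ∣ 1 := by exact_mod_cast h2
  exact hq.one_lt.ne' (Nat.dvd_one.mp h3)

lemma gl_split (d : ℕ) (hd0 : 0 < d) (t : R) (ht : t ^ 2 = -(d : R)) 
    (hrep : ∀ x : R, ∃ a b : ℤ, x = a + b * t) (q : ℕ) (hq : q.Prime) (b : ℤ)
    (hb : (q:ℤ) ∣ b ^ 2 + d) (hcop : IsCoprime (q:ℤ) (2 * b)) :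
    ∃ P Q : Ideal R, P * Q = span {(q:R)} ∧ P ≠ Q ∧ P ≠ ⊤ ∧ Q ≠ ⊤ := by
  obtain ⟨x, y, hxy⟩ := hcop
  have hxy' : (x:R) * q + y * (2 * b) = 1 := by exact_mod_cast congrArg (fun x : ℤ => (x:R)) hxy
  obtain ⟨e, he⟩ := hb
  have he' : (b:R)^2 + d = q * e := by exact_mod_cast congrArg (fun x : ℤ => (x:R)) he
  have hprod : span {(q:R), b + t} * span {(q:R), b - t} = span {(q:R)} := by
    apply le_antisymm
    · rw [Ideal.span_pair_mul_span_pair, Ideal.span_le]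
      intro z hz
      simp only [Set.mem_insert_iff, Set.mem_singleton_iff] at hz
      rw [SetLike.mem_coe, Ideal.mem_span_singleton]
      rcases hz with rfl | rfl | rfl | rfl
      · exact ⟨q, rfl⟩
      · exact ⟨b - t, rfl⟩
      · exact ⟨b + t, mul_comm _ _⟩
      · exact ⟨e, by linear_combination he' - ht⟩
    · rw [Ideal.span_singleton_le_iff_mem]
      have h1 : (q:R) = x * (q * q) + (y * (q * (b - t)) + y * ((b + t) * q)) := by
        linear_combination -(q:R) * hxy'
      have hq1 : (q:R) ∈ span {(q:R), b + t} := Ideal.subset_span (by simp)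
      have hq2 : (q:R) ∈ span {(q:R), b - t} := Ideal.subset_span (by simp)
      have ht1 : b + t ∈ span {(q:R), b + t} := Ideal.subset_span (by simp)
      have ht2 : b - t ∈ span {(q:R), b - t} := Ideal.subset_span (by simp)
      have hmem := add_mem (Ideal.mul_mem_left _ (x:R) (Ideal.mul_mem_mul hq1 hq2))
        (add_mem (Ideal.mul_mem_left _ (y:R) (Ideal.mul_mem_mul hq1 ht2))
          (Ideal.mul_mem_left _ (y:R) (Ideal.mul_mem_mul ht1 hq2)))
      rwa [← h1] at hmem
  have hP1 : span {(q:R), b + t} ≠ ⊤ := by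
    intro h
    rw [h, Ideal.top_mul] at hprod
    apply gl_not_mem d hd0 t ht hrep q hq b (-1) (Or.inr rfl)
    rw [← hprod]
    exact Ideal.subset_span (by right; simp [sub_eq_add_neg])
  have hQ1 : span {(q:R), b - t} ≠ ⊤ := by
    intro h
    rw [h, Ideal.mul_top] at hprod
    apply gl_not_mem d hd0 t ht hrep q hq b 1 (Or.inl rfl)
    rw [← hprod]
    exact Ideal.subset_span (by right; simp)
  refine ⟨_, _, hprod, ?_, hP1, hQ1⟩
  intro h
  apply hP1
  rw [Ideal.eq_top_iff_one, ← hxy']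
  have hq1 : (q:R) ∈ span {(q:R), b + t} := Ideal.subset_span (by simp)
  have ht1 : b + t ∈ span {(q:R), b + t} := Ideal.subset_span (by simp)
  have ht2 : b - t ∈ span {(q:R), b + t} := by rw [h]; exact Ideal.subset_span (by simp)
  refine add_mem (Ideal.mul_mem_left _ _ hq1) (Ideal.mul_mem_left _ _ ?_)
  have : 2 * (b:R) = (b + t) + (b - t) := by ring
  rw [this]; exact add_mem ht1 ht2

lemma gl_inert (d : ℕ) (hd0 : 0 < d) (t : R) (ht : t ^ 2 = -(d : R)) 
    (hrep : ∀ x : R, ∃ a b : ℤ, x = a + b * t) (q : ℕ) [Fact q.Prime] 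
    (hns : ¬ IsSquare (-(d : ZMod q))) : (span {(q:R)}).IsPrime := by
  have hq : q.Prime := Fact.out
  have key : ∀ a b : ℤ, (q:ℤ) ∣ a^2 + d * b^2 → (a:R) + b * t ∈ span {(q:R)} := by
    intro a b h
    have h1 : (a : ZMod q)^2 + d * (b : ZMod q)^2 = 0 := by
      have := (ZMod.intCast_zmod_eq_zero_iff_dvd _ q).mpr h
      push_cast at this; exact this
    have hb : (b : ZMod q) = 0 := by
      by_contra hb
      apply hns
      refine ⟨a / b, ?_⟩
      field_simp
      linear_combination -h1
    have ha : (a : ZMod q) = 0 := by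
      rw [hb] at h1; simpa using h1
    rw [ZMod.intCast_zmod_eq_zero_iff_dvd] at ha hb
    obtain ⟨x, rfl⟩ := ha
    obtain ⟨y, rfl⟩ := hb
    rw [Ideal.mem_span_singleton]
    exact ⟨x + y * t, by push_cast; ring⟩
  refine ⟨?_, ?_⟩
  · intro h
    apply gl_not_mem d hd0 t ht hrep q hq 0 1 (Or.inl rfl)
    rw [h]; trivial
  · intro x y hxy
    obtain ⟨a, b, rfl⟩ := hrep x
    obtain ⟨a', b', rfl⟩ := hrep y
    rw [Ideal.mem_span_singleton] at hxy
    obtain ⟨z, hz⟩ := hxy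
    obtain ⟨u, v, rfl⟩ := hrep z
    have h4 := gl_uniq' d hd0 t ht (a * a' - d * b * b') (a * b' + b * a') (q * u) (q * v) (by
      push_cast; linear_combination hz - b * b' * ht)
    have h5 : (q:ℤ) ∣ (a^2 + d * b^2) * (a'^2 + d * b'^2) := by
      have : (a^2 + d * b^2) * (a'^2 + d * b'^2) = (a * a' - d * b * b')^2 + d * (a * b' + b * a')^2 := by ring
      rw [this, h4.1, h4.2]
      exact ⟨q * u^2 + d * q * v^2, by ring⟩
    rcases (Nat.prime_iff_prime_int.mp hq).dvd_or_dvd h5 with h | h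
    · left; exact key _ _ h
    · right; exact key _ _ h

lemma gl_hX (d : ℕ) (hd0 : 0 < d) (hsq : Squarefree d) (hd : d % 4 = 1 ∨ d % 4 = 2) (t : R) (ht : t ^ 2 = -(d : R)) 
    (hrep : ∀ x : R, ∃ a b : ℤ, x = a + b * t) (X : ℕ → ℤ) (h2 : X 2 = 0)
    (hdvd : ∀ q : ℕ, q.Prime → q ∣ d → X q = 0)
    (hleg : ∀ (q : ℕ) [Fact q.Prime], q ≠ 2 → ¬ q ∣ d → X q = legendreSym q (-d)) (q : ℕ) (hq : q.Prime) :
    (X q = 0 ∧ ∃ P : Ideal R, P ^ 2 = span {(q:R)}) ∨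
      (X q = 1 ∧ ∃ P Q : Ideal R, P * Q = span {(q:R)} ∧ P ≠ Q ∧ P ≠ ⊤ ∧ Q ≠ ⊤) ∨
      (X q = -1 ∧ (span {(q:R)}).IsPrime) := by
  by_cases hqd : q ∣ d
  · exact Or.inl ⟨hdvd q hq hqd, gl_ram1 d q t ht hsq hqd⟩
  by_cases hq2 : q = 2
  · subst hq2
    exact Or.inl ⟨h2, gl_ram2 d t ht (by omega)⟩
  right
  have := Fact.mk hq
  rw [hleg q hq2 hqd]
  have hnz : ((-(d:ℤ) : ℤ) : ZMod q) ≠ 0 := by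
    push_cast
    rw [neg_ne_zero, Ne, ZMod.natCast_eq_zero_iff]; exact hqd
  rcases legendreSym.eq_one_or_neg_one q hnz with h | h
  · left
    refine ⟨h, ?_⟩
    obtain ⟨c, hc⟩ := (legendreSym.eq_one_iff q hnz).mp h
    have hb : ((c.val : ℤ) : ZMod q) = c := by simp
    apply gl_split d hd0 t ht hrep q hq (c.val : ℤ)
    · rw [← ZMod.intCast_zmod_eq_zero_iff_dvd]
      push_cast at hc ⊢
      simp only [ZMod.natCast_val, ZMod.cast_id', id]
      linear_combination -hc
    · rw [Int.isCoprime_iff_gcd_eq_one]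
      rw [show (2 * (c.val:ℤ)) = ((2 * c.val : ℕ) : ℤ) by push_cast; rfl, Int.gcd_natCast_natCast]
      rw [← Nat.Coprime, Nat.Prime.coprime_iff_not_dvd hq]
      intro hdv
      rcases hq.dvd_mul.mp hdv with h' | h'
      · exact hq2 ((Nat.prime_dvd_prime_iff_eq hq Nat.prime_two).mp h')
      · have hc0 : c = 0 := by
          rw [← ZMod.natCast_eq_zero_iff] at h'; simpa using h'
        rw [hc0] at hc
        exact hnz (by simpa using hc)
  · right
    refine ⟨h, gl_inert d hd0 t ht hrep q ?_⟩
    have := (legendreSym.eq_neg_one_iff q).mp h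
    push_cast at this; exact this
end

section
open NumberField

lemma gl_residue (d : ℕ) (hd2 : 2 ≤ d) (hsq : Squarefree d) (hd : d % 4 = 1 ∨ d % 4 = 2)
    (K : Type) [Field K] [NumberField K]
    (θ : K) (hθ : θ ^ 2 = -(d : K)) (hgen : Algebra.adjoin ℚ {θ} = ⊤)
    (X : ℕ → ℤ) (hX0 : X 0 = 0) (hX1 : X 1 = 1) (hXmul : ∀ m n, X (m * n) = X m * X n)
    (hXb : ∀ n, |X n| ≤ 1) (h2 : X 2 = 0)
    (hdvd : ∀ q : ℕ, q.Prime → q ∣ d → X q = 0)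
    (hleg : ∀ (q : ℕ) [Fact q.Prime], q ≠ 2 → ¬ q ∣ d → X q = legendreSym q (-d))
    (F : ℝ → ℂ) (hF : ∀ s : ℝ, 1 < s → HasSum (fun n : ℕ => (X n : ℂ) / (n:ℂ) ^ (s:ℂ)) (F s))
    (L : ℝ) (hL : Tendsto F (𝓝[>] 1) (𝓝 (L : ℂ))) :
    Real.pi * classNumber K / (2 * √d) = L := by
  obtain ⟨t, ht, hrep⟩ := gl_int d (by omega) hsq hd K θ hθ hgen
  obtain ⟨hfr, hres⟩ := gl_invariants d hd2 K t ht hrep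
  have hcount := gl_count (R := 𝓞 K) hfr X hX1 hXmul
    (gl_hX d (by omega) hsq hd t ht hrep X h2 hdvd hleg)
  have hzeta : ∀ s : ℝ, 1 < s → dedekindZeta K s = riemannZeta s * F s := by
    intro s hs
    have hs' : 1 < (s:ℂ).re := by simpa using hs
    have hXs : LSeriesSummable (fun n => (X n : ℂ)) s := by
      refine LSeriesSummable_of_bounded_of_one_lt_re (m := 1) (fun n _ => ?_) hs'
      rw [Complex.norm_intCast]; exact_mod_cast hXb n
    have hFs : LSeries (fun n => (X n : ℂ)) s = F s := by
      unfold LSeries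
      rw [← (hF s hs).tsum_eq]
      refine tsum_congr fun n => ?_
      rw [LSeries.term_def]
      split_ifs with h
      · simp [h, hX0]
      · rfl
    rw [← hFs, ← LSeries_one_eq_riemannZeta hs', ← LSeries_convolution' (LSeriesSummable_one_iff.mpr hs') hXs]
    unfold dedekindZeta
    refine LSeries_congr (fun {n} hn => ?_) _
    rw [LSeries.convolution_def]
    simp only [Pi.one_apply, one_mul]
    rw [Nat.sum_divisorsAntidiagonal' (fun _ j => (X j : ℂ))]
    have := hcount n hn
    unfold glA at this
    exact_mod_cast congrArg (fun z : ℤ => (z:ℂ)) this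
  have hz : Tendsto (fun s : ℝ => ((s:ℂ) - 1) * riemannZeta s) (𝓝[>] 1) (𝓝 1) := by
    refine riemannZeta_residue_one.comp ?_
    refine tendsto_nhdsWithin_iff.mpr ⟨?_, ?_⟩
    · have := (Complex.continuous_ofReal.tendsto 1).mono_left (nhdsWithin_le_nhds (s := Set.Ioi 1))
      simpa using this
    · filter_upwards [self_mem_nhdsWithin] with s hs
      have hs : (1:ℝ) < s := hs
      simp only [Set.mem_compl_iff, Set.mem_singleton_iff]
      intro h
      have : s = 1 := by exact_mod_cast h
      linarith
  have h1 := tendsto_sub_one_mul_dedekindZeta_nhdsGT K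
  have h3 := hz.mul hL
  have h4 : Tendsto (fun s : ℝ ↦ ((s:ℂ) - 1) * dedekindZeta K s) (𝓝[>] 1) (𝓝 (1 * (L:ℂ))) := by
    refine h3.congr' ?_
    filter_upwards [self_mem_nhdsWithin] with s hs
    rw [hzeta s hs]; ring
  have h5 := tendsto_nhds_unique h1 h4
  rw [one_mul] at h5
  rw [← hres]
  exact_mod_cast h5
end

noncomputable def glS (j : ℕ) : ℝ := Real.sin (j * (Real.pi / 4))

lemma glS_add_four (j : ℕ) : glS (j + 4) = -glS j := by
  unfold glS
  rw [show ((j + 4 : ℕ) : ℝ) * (Real.pi / 4) = j * (Real.pi / 4) + Real.pi by push_cast; ring, Real.sin_add_pi]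

lemma glS_add_eight (j : ℕ) : glS (j + 8) = glS j := by
  rw [show j + 8 = (j + 4) + 4 by ring, glS_add_four, glS_add_four, neg_neg]

lemma glS_mul (k j : ℕ) : glS (8 * k + j) = glS j := by
  induction k with
  | zero => simp
  | succ k ih => rw [show 8 * (k + 1) + j = (8 * k + j) + 8 by ring, glS_add_eight, ih]

lemma glS_0 : glS 0 = 0 := by simp [glS]
lemma glS_1 : glS 1 = √2 / 2 := by simp [glS]
lemma glS_2 : glS 2 = 1 := by
  unfold glS; rw [show ((2:ℕ):ℝ) * (Real.pi / 4) = Real.pi / 2 by push_cast; ring, Real.sin_pi_div_two]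
lemma glS_3 : glS 3 = √2 / 2 := by
  unfold glS
  rw [show ((3:ℕ):ℝ) * (Real.pi / 4) = Real.pi - Real.pi / 4 by push_cast; ring, Real.sin_pi_sub, Real.sin_pi_div_four]

lemma glS_mod (j : ℕ) : glS j = glS (j % 8) := by
  conv_lhs => rw [← Nat.div_add_mod j 8]
  rw [glS_mul]

lemma glS_4 : glS 4 = 0 := by rw [show 4 = 0 + 4 by rfl, glS_add_four, glS_0, neg_zero]
lemma glS_5 : glS 5 = -(√2 / 2) := by rw [show 5 = 1 + 4 by rfl, glS_add_four, glS_1]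
lemma glS_6 : glS 6 = -1 := by rw [show 6 = 2 + 4 by rfl, glS_add_four, glS_2]
lemma glS_7 : glS 7 = -(√2 / 2) := by rw [show 7 = 3 + 4 by rfl, glS_add_four, glS_3]

lemma glS_chi4 (n : ℕ) : glS (2 * n) = ((ZMod.χ₄ (n : ZMod 4) : ℤ) : ℝ) := by
  rw [ZMod.χ₄_nat_eq_if_mod_four, glS_mod]
  have h : n % 4 = 0 ∨ n % 4 = 1 ∨ n % 4 = 2 ∨ n % 4 = 3 := by omega
  rcases h with h | h | h | h
  · rw [show 2 * n % 8 = 0 by omega, if_pos (by omega), glS_0]; simp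
  · rw [show 2 * n % 8 = 2 by omega, if_neg (by omega), if_pos h, glS_2]; simp
  · rw [show 2 * n % 8 = 4 by omega, if_pos (by omega), glS_4]; simp
  · rw [show 2 * n % 8 = 6 by omega, if_neg (by omega), if_neg (by omega), glS_6]; simp

lemma glS_chi8 (n : ℕ) : glS n + glS (3 * n) = √2 * ((ZMod.χ₈' (n : ZMod 8) : ℤ) : ℝ) := by
  rw [ZMod.χ₈'_nat_eq_if_mod_eight, glS_mod n, glS_mod (3 * n)]
  have h : n % 8 = 0 ∨ n % 8 = 1 ∨ n % 8 = 2 ∨ n % 8 = 3 ∨ n % 8 = 4 ∨ n % 8 = 5 ∨ n % 8 = 6 ∨ n % 8 = 7 := by omega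
  rcases h with h | h | h | h | h | h | h | h
  · rw [h, show 3 * n % 8 = 0 by omega, if_pos (by omega), glS_0]; simp
  · rw [h, show 3 * n % 8 = 3 by omega, if_neg (by omega), if_pos (by omega), glS_1, glS_3]; simp
  · rw [h, show 3 * n % 8 = 6 by omega, if_pos (by omega), glS_2, glS_6]; simp
  · rw [h, show 3 * n % 8 = 1 by omega, if_neg (by omega), if_pos (by omega), glS_1, glS_3]; simp
  · rw [h, show 3 * n % 8 = 4 by omega, if_pos (by omega), glS_4]; simp
  · rw [h, show 3 * n % 8 = 7 by omega, if_neg (by omega), if_neg (by omega), glS_5, glS_7]; push_cast; ring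
  · rw [h, show 3 * n % 8 = 2 by omega, if_pos (by omega), glS_2, glS_6]; simp
  · rw [h, show 3 * n % 8 = 5 by omega, if_neg (by omega), if_neg (by omega), glS_5, glS_7]; push_cast; ring

lemma gl_abs_le (N : ℕ) (χ : MulChar (ZMod N) ℤ) (hχ : χ.IsQuadratic) (p : ℕ) [Fact p.Prime] (x : ZMod N) (n : ℤ) :
    |χ x * legendreSym p n| ≤ 1 := by
  have h2 : legendreSym p n = 0 ∨ legendreSym p n = 1 ∨ legendreSym p n = -1 := 
    quadraticChar_isQuadratic (ZMod p) (n : ZMod p)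
  rcases hχ x with h | h | h <;> rcases h2 with h' | h' | h' <;> rw [h, h'] <;> simp

lemma gl_legendre_p (p : ℕ) [Fact p.Prime] : legendreSym p (p:ℤ) = 0 := by
  rw [legendreSym.eq_zero_iff]; simp

lemma gl_sign (h : ℕ) (T : ℤ) (p : ℕ) (hp : 0 < p) (G c : ℝ) (hc : 0 < c) (hG : G = √p ∨ G = -√p)
    (hh : Real.pi * h / (2 * (c * √p)) = Real.pi * T / (c * G)) : (h:ℤ) = 2 * T ∨ (h:ℤ) = -(2 * T) := by
  have hs : 0 < √(p:ℝ) := Real.sqrt_pos.mpr (by exact_mod_cast hp)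
  have hpi := Real.pi_pos
  rcases hG with rfl | rfl
  · left
    have : (h:ℝ) = 2 * T := by
      field_simp at hh
      linarith
    exact_mod_cast this
  · right
    have : (h:ℝ) = -(2 * T) := by
      rw [mul_neg, div_neg] at hh
      field_simp at hh
      linarith
    exact_mod_cast this

lemma gl_h (p : ℕ) [Fact p.Prime] (m : ℕ) (hm : p = 8 * m + 1) (K : Type) [Field K] [NumberField K]
    (α : K) (hα : α ^ 2 = -(p : K)) (hgen : Algebra.adjoin ℚ {α} = ⊤) :
    (NumberField.classNumber K : ℤ) = 2 * glT p (2 * m) ∨ (NumberField.classNumber K : ℤ) = -(2 * glT p (2 * m)) := by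
  have hp : p.Prime := Fact.out
  obtain ⟨G, hG1, hG2⟩ := gl_gauss p (by omega)
  have hs : 0 < √(p:ℝ) := Real.sqrt_pos.mpr (by exact_mod_cast hp.pos)
  have hG0 : G ≠ 0 := by rcases hG1 with rfl | rfl <;> simp [hs.ne']
  obtain ⟨F, hF, hL⟩ := gl_Lval p m hm G hG0 hG2 2 (by norm_num) (by norm_num)
  have := gl_residue p hp.two_le hp.squarefree (by left; omega) K α hα hgen
    (fun n => ZMod.χ₄ (n : ZMod 4) * legendreSym p (n:ℤ)) (by simp) (by simp)
    (fun a b => by push_cast; rw [map_mul, legendreSym.mul]; ring)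
    (fun n => gl_abs_le 4 _ ZMod.isQuadratic_χ₄ p _ _)
    (by simp [ZMod.χ₄_nat_eq_if_mod_four 2])
    (fun q hq hqp => by rw [(Nat.prime_dvd_prime_iff_eq hq hp).mp hqp, gl_legendre_p, mul_zero])
    (fun q _ hq2 _ => by
      rw [neg_eq_neg_one_mul, legendreSym.mul, legendreSym.at_neg_one hq2,
        legendreSym.quadratic_reciprocity_one_mod_four (by omega) hq2])
    F (fun s hs => by
      refine (hF s hs).congr_fun fun n => ?_
      rw [show 2 * Real.pi * (((2:ℕ):ℝ)/8) * n = ((2 * n : ℕ) : ℝ) * (Real.pi / 4) by push_cast; ring]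
      have := glS_chi4 n
      unfold glS at this
      rw [this]
      push_cast; ring) _ hL
  exact gl_sign _ _ p hp.pos G 1 one_pos hG1 (by rw [one_mul, one_mul]; exact this)

lemma gl_h' (p : ℕ) [Fact p.Prime] (m : ℕ) (hm : p = 8 * m + 1) (K : Type) [Field K] [NumberField K]
    (β : K) (hβ : β ^ 2 = -(2 * (p : K))) (hgen : Algebra.adjoin ℚ {β} = ⊤) :
    (NumberField.classNumber K : ℤ) = 2 * (glT p m + glT p (3 * m)) ∨
      (NumberField.classNumber K : ℤ) = -(2 * (glT p m + glT p (3 * m))) := by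
  have hp : p.Prime := Fact.out
  obtain ⟨G, hG1, hG2⟩ := gl_gauss p (by omega)
  have hs : 0 < √(p:ℝ) := Real.sqrt_pos.mpr (by exact_mod_cast hp.pos)
  have hG0 : G ≠ 0 := by rcases hG1 with rfl | rfl <;> simp [hs.ne']
  obtain ⟨F1, hF1, hL1⟩ := gl_Lval p m hm G hG0 hG2 1 (by norm_num) (by norm_num)
  obtain ⟨F3, hF3, hL3⟩ := gl_Lval p m hm G hG0 hG2 3 (by norm_num) (by norm_num)
  have h22 : (0:ℝ) < √2 := by positivity
  have h22' : ((√2 : ℝ) : ℂ) ≠ 0 := by exact_mod_cast h22.ne'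
  have hL := (hL1.add hL3).div_const ((√2 : ℝ) : ℂ)
  rw [← Complex.ofReal_add, ← Complex.ofReal_div] at hL
  have hcop : Nat.Coprime 2 p := (Nat.coprime_primes Nat.prime_two hp).mpr (by omega)
  have := gl_residue (2 * p) (by have := hp.two_le; omega)
    ((Nat.squarefree_mul hcop).mpr ⟨Nat.prime_two.squarefree, hp.squarefree⟩) (by right; omega) K β
    (by push_cast; exact hβ) hgen
    (fun n => ZMod.χ₈' (n : ZMod 8) * legendreSym p (n:ℤ)) (by simp) (by simp)
    (fun a b => by push_cast; rw [map_mul, legendreSym.mul]; ring)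
    (fun n => gl_abs_le 8 _ ZMod.isQuadratic_χ₈' p _ _)
    (by simp [ZMod.χ₈'_nat_eq_if_mod_eight 2])
    (fun q hq hqp => by
      rcases hq.dvd_mul.mp hqp with h | h
      · rw [(Nat.prime_dvd_prime_iff_eq hq Nat.prime_two).mp h, ZMod.χ₈'_nat_eq_if_mod_eight]; simp
      · rw [(Nat.prime_dvd_prime_iff_eq hq hp).mp h, gl_legendre_p, mul_zero])
    (fun q _ hq2 _ => by
      rw [show (-((2 * p : ℕ) : ℤ)) = (-2) * (p:ℤ) by push_cast; ring, legendreSym.mul, legendreSym.at_neg_two hq2,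
        legendreSym.quadratic_reciprocity_one_mod_four (by omega) hq2])
    (fun s => (F1 s + F3 s) / ((√2 : ℝ) : ℂ)) (fun s hs => by
      refine (((hF1 s hs).add (hF3 s hs)).div_const ((√2 : ℝ) : ℂ)).congr_fun fun n => ?_
      rw [show 2 * Real.pi * (((1:ℕ):ℝ)/8) * n = (n : ℝ) * (Real.pi / 4) by push_cast; ring,
        show 2 * Real.pi * (((3:ℕ):ℝ)/8) * n = ((3 * n : ℕ) : ℝ) * (Real.pi / 4) by push_cast; ring]
      have h3 := glS_chi8 n
      unfold glS at h3
      rw [← add_div, ← Complex.ofReal_add, ← mul_add, h3]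
      push_cast
      field_simp) _ hL
  refine gl_sign _ _ p hp.pos G (√2) h22 hG1 ?_
  rw [← Real.sqrt_mul (by norm_num)]
  push_cast at this
  rw [this]
  push_cast
  rw [one_mul]
  field_simp

theorem glaisher_class_numbers (p : ℕ) (hp : p.Prime) (h8 : p % 8 = 1)
    (K K' : Type) [Field K] [NumberField K] [Field K'] [NumberField K']
    (α : K) (hα : α ^ 2 = -(p : K)) (hKgen : Algebra.adjoin ℚ {α} = ⊤)
    (β : K') (hβ : β ^ 2 = -(2 * (p : K'))) (hK'gen : Algebra.adjoin ℚ {β} = ⊤) :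
    (p % 16 = 1 →
      (8 ∣ NumberField.classNumber K ↔ 8 ∣ NumberField.classNumber K')) ∧
    (p % 16 = 9 →
      Xor' (8 ∣ NumberField.classNumber K) (8 ∣ NumberField.classNumber K')) := by
  have := Fact.mk hp
  have hm : p = 8 * (p / 8) + 1 := by omega
  exact gl_final p (p / 8) hm _ _ (gl_h p _ hm K α hα hKgen) (gl_h' p _ hm K' β hβ hK'gen)
end

section
/- For every nonnegative integer k, writing n = 8k+1, the following equality of integers holds: the number of pairs (x,y) ∈ ℤ² with n = x² + 16y², x > 0, and either (x ≡ ±1 (mod 8) and y even) or (x ≡ ±3 (mod 8) and y odd), minus the number of pairs (x,y) ∈ ℤ² with n = x² + 16y², x > 0, and either (x ≡ ±3 (mod 8) and y even) or (x ≡ ±1 (mod 8) and y odd), equals the number of pairs (x,y) ∈ ℤ² with n = x² + 8y², x > 0, and y even, minus the number of pairs (x,y) ∈ ℤ² with n = x² + 8y², x > 0, and y odd. -/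
/-- The generating series of the weight `w` graded by `d`. -/
noncomputable def genS {ι : Type} (d w : ι → ℤ) : PowerSeries ℤ :=
  PowerSeries.mk fun n => ∑ᶠ i ∈ {i | d i = (n : ℤ)}, w i

/-- Nonnegative grading with finite fibres. -/
def GoodDeg {ι : Type} (d : ι → ℤ) : Prop :=
  (∀ i, 0 ≤ d i) ∧ ∀ n : ℤ, {i | d i = n}.Finite

/-- The sign of the parity of an integer. -/
def sgn2 (n : ℤ) : ℤ := if n % 2 = 0 then 1 else -1

lemma sgn2_add (a b : ℤ) : sgn2 (a + b) = sgn2 a * sgn2 b := by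
  unfold sgn2
  split_ifs <;> first | rfl | omega

lemma sgn2_congr (a b : ℤ) (h : a % 2 = b % 2) : sgn2 a = sgn2 b := by
  unfold sgn2
  rw [h]

lemma sgn2_opp (a b : ℤ) (h : a % 2 ≠ b % 2) : sgn2 a + sgn2 b = 0 := by
  unfold sgn2
  split_ifs <;> first | rfl | omega

lemma GoodDeg.prod {ι κ : Type} {d : ι → ℤ} {e : κ → ℤ} (hd : GoodDeg d) (he : GoodDeg e) :
    GoodDeg (fun p : ι × κ => d p.1 + e p.2) := by
  refine ⟨fun p => add_nonneg (hd.1 _) (he.1 _), fun n => ?_⟩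
  have h1 : (⋃ a ∈ Set.Icc (0 : ℤ) n, {i | d i = a}).Finite :=
    (Set.finite_Icc _ _).biUnion fun a _ => hd.2 a
  have h2 : (⋃ a ∈ Set.Icc (0 : ℤ) n, {i | e i = a}).Finite :=
    (Set.finite_Icc _ _).biUnion fun a _ => he.2 a
  refine (h1.prod h2).subset ?_
  rintro ⟨i, j⟩ h
  have := hd.1 i
  have := he.1 j
  simp only [Set.mem_ofPred_eq] at h
  simp only [Set.mem_prod, Set.mem_iUnion, Set.mem_ofPred_eq, Set.mem_Icc, exists_prop,
    exists_eq_right']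
  omega

lemma genS_mul {ι κ : Type} {d w : ι → ℤ} {e v : κ → ℤ} (hd : GoodDeg d) (he : GoodDeg e) :
    genS d w * genS e v = genS (fun p : ι × κ => d p.1 + e p.2) (fun p => w p.1 * v p.2) := by
  classical
  ext n
  have hp := hd.prod he
  rw [PowerSeries.coeff_mul]
  simp only [genS, PowerSeries.coeff_mk]
  rw [finsum_mem_eq_finite_toFinset_sum _ (hp.2 n)]
  rw [← Finset.sum_fiberwise_of_maps_to (t := Finset.HasAntidiagonal.antidiagonal n)
    (g := fun p : ι × κ => ((d p.1).toNat, (e p.2).toNat))]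
  · refine Finset.sum_congr rfl fun ab hab => ?_
    rw [finsum_mem_eq_finite_toFinset_sum _ (hd.2 _), finsum_mem_eq_finite_toFinset_sum _ (he.2 _),
      Finset.sum_mul_sum, ← Finset.sum_product']
    refine Finset.sum_congr ?_ fun _ _ => rfl
    ext ⟨i, j⟩
    have := hd.1 i
    have := he.1 j
    obtain ⟨a, b⟩ := ab
    simp only [Finset.HasAntidiagonal.mem_antidiagonal] at hab
    simp only [Finset.mem_product, Set.Finite.mem_toFinset, Set.mem_ofPred_eq, Finset.mem_filter,
      Prod.mk.injEq]
    omega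
  · rintro ⟨i, j⟩ h
    have := hd.1 i
    have := he.1 j
    simp only [Set.Finite.mem_toFinset, Set.mem_ofPred_eq] at h
    simp only [Finset.HasAntidiagonal.mem_antidiagonal]
    omega

lemma genS_reindex {ι κ : Type} {d w : ι → ℤ} {e v : κ → ℤ} (hd : GoodDeg d) (f : κ → ι)
    (hf : Function.Injective f) (h1 : ∀ j, d (f j) = e j) (h2 : ∀ j, w (f j) = v j)
    (h3 : ∀ i, i ∉ Set.range f → w i = 0) : genS e v = genS d w := by
  classical
  ext n
  simp only [genS, PowerSeries.coeff_mk]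
  have hfin : {j | e j = (n : ℤ)}.Finite := by
    refine Set.Finite.of_finite_image ((hd.2 n).subset ?_) (hf.injOn (s := _))
    rintro _ ⟨j, hj, rfl⟩
    simpa [h1] using hj
  rw [finsum_mem_eq_finite_toFinset_sum _ (hd.2 n), finsum_mem_eq_finite_toFinset_sum _ hfin]
  refine Finset.sum_of_injOn f hf.injOn ?_ ?_ fun j _ => (h2 j).symm
  · intro j hj
    simpa [h1] using hj
  · intro i hi hni
    apply h3
    rintro ⟨j, rfl⟩
    apply hni
    refine ⟨j, ?_, rfl⟩
    simpa [h1] using hi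

lemma genS_cancel {ι : Type} {d w v : ι → ℤ} (hd : GoodDeg d) (σ : ι → ι)
    (hσ : Function.Involutive σ) (h1 : ∀ i, d (σ i) = d i)
    (h2 : ∀ i, w i + w (σ i) = v i + v (σ i)) : genS d w = genS d v := by
  have key : ∀ u : ι → ℤ, genS d u = genS d (fun i => u (σ i)) := fun u =>
    (genS_reindex hd σ hσ.injective h1 (fun _ => rfl)
      (fun i hi => (hi (hσ.surjective i)).elim)).symm
  have hadd : ∀ u u' : ι → ℤ, genS d u + genS d u' = genS d (fun i => u i + u' i) := by
    intro u u'
    ext n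
    simp only [genS, PowerSeries.coeff_mk, map_add]
    exact (finsum_mem_add_distrib (hd.2 n)).symm
  have h : genS d w + genS d w = genS d v + genS d v := by
    nth_rewrite 2 [key w]
    nth_rewrite 2 [key v]
    rw [hadd, hadd]
    congr 1
    funext i
    exact h2 i
  ext n
  have := congrArg (PowerSeries.coeff n) h
  simp only [map_add] at this
  omega

lemma goodDeg_of (d : ℤ → ℤ) (h : ∀ i, |i| ≤ d i) : GoodDeg d := by
  refine ⟨fun i => (abs_nonneg i).trans (h i), fun n => (Set.finite_Icc (-n) n).subset ?_⟩
  intro i hi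
  have := h i
  rw [Set.mem_ofPred_eq] at hi
  rw [hi] at this
  exact abs_le.1 this

lemma genS_const (d w : ℤ → ℤ) (h : ∀ i, |i| ≤ d i) (h0 : d 0 = 0) :
    PowerSeries.constantCoeff (genS d w) = w 0 := by
  rw [← PowerSeries.coeff_zero_eq_constantCoeff_apply]
  simp only [genS, PowerSeries.coeff_mk]
  have : {i | d i = ((0 : ℕ) : ℤ)} = {0} := by
    ext i
    simp only [Set.mem_ofPred_eq, Set.mem_singleton_iff]
    constructor
    · intro hi
      have := h i
      rw [hi] at this
      simpa using this
    · rintro rfl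
      simpa using h0
  rw [this, finsum_mem_singleton]

lemma abs_le_sq' (x : ℤ) : |x| ≤ x ^ 2 := by
  rw [abs_le]
  constructor
  · rcases le_or_gt 0 x with h | h <;> nlinarith
  · rcases le_or_gt x 0 with h | h <;> nlinarith

lemma deg_psi (x : ℤ) : |x| ≤ 2 * x ^ 2 + x := by
  have := abs_le_sq' x
  rcases abs_cases x with h | h <;> linarith

lemma deg_psi2 (x : ℤ) : |x| ≤ 4 * x ^ 2 + 2 * x := by
  have := deg_psi x
  have := abs_nonneg x
  linarith

lemma deg_phi2 (x : ℤ) : |x| ≤ 2 * x ^ 2 := by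
  have := abs_le_sq' x
  have := sq_nonneg x
  linarith

/-- The change of variables `(x, m) ↦ (a, b)`. -/
def chg (p : ℤ × ℤ) : ℤ × ℤ :=
  if p.1 % 2 = 0 then (p.2 + p.1 / 2, p.2 - p.1 / 2)
  else (-p.2 + (p.1 - 1) / 2, -1 - p.2 - (p.1 - 1) / 2)

lemma chg_even (t m : ℤ) : chg (2 * t, m) = (m + t, m - t) := by
  simp [chg]

lemma chg_odd (t m : ℤ) : chg (2 * t + 1, m) = (-m + t, -1 - m - t) := by
  have : (2 * t + 1) % 2 = 1 := by omega
  simp [chg, this]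

lemma int_cases (x : ℤ) : (∃ t, x = 2 * t) ∨ ∃ t, x = 2 * t + 1 := Int.even_or_odd' x |>.elim
  fun t h => h.elim (fun h => Or.inl ⟨t, h⟩) fun h => Or.inr ⟨t, h⟩

lemma chg_inj : Function.Injective chg := by
  rintro ⟨x, m⟩ ⟨y, n⟩ h
  rcases int_cases x with ⟨t, rfl⟩ | ⟨t, rfl⟩ <;> rcases int_cases y with ⟨s, rfl⟩ | ⟨s, rfl⟩ <;>
  simp only [chg_even, chg_odd, Prod.mk.injEq] at h ⊢ <;> omega

lemma chg_surj (p : ℤ × ℤ) : p ∈ Set.range chg := by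
  obtain ⟨a, b⟩ := p
  rcases int_cases (a - b) with ⟨t, h⟩ | ⟨t, h⟩
  · refine ⟨(2 * t, b + t), ?_⟩
    rw [chg_even, Prod.mk.injEq]
    omega
  · refine ⟨(2 * t + 1, t - a), ?_⟩
    rw [chg_odd, Prod.mk.injEq]
    omega

lemma chg_deg (p : ℤ × ℤ) : (2 * (chg p).1 ^ 2 + (chg p).1) + (2 * (chg p).2 ^ 2 + (chg p).2) =
    p.1 ^ 2 + (4 * p.2 ^ 2 + 2 * p.2) := by
  obtain ⟨x, m⟩ := p
  rcases int_cases x with ⟨t, rfl⟩ | ⟨t, rfl⟩ <;> simp only [chg_even, chg_odd] <;> ring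

lemma chg_sgn (p : ℤ × ℤ) : sgn2 (chg p).1 * sgn2 (chg p).2 = sgn2 p.1 * 1 := by
  obtain ⟨x, m⟩ := p
  rw [← sgn2_add, mul_one]
  apply sgn2_congr
  rcases int_cases x with ⟨t, rfl⟩ | ⟨t, rfl⟩ <;> simp only [chg_even, chg_odd] <;> omega

noncomputable abbrev psiS (w : ℤ → ℤ) := genS (fun m => 2 * m ^ 2 + m) w
noncomputable abbrev phiS (w : ℤ → ℤ) := genS (fun m => m ^ 2) w
noncomputable abbrev psiT (w : ℤ → ℤ) := genS (fun m => 4 * m ^ 2 + 2 * m) w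
noncomputable abbrev phiT (w : ℤ → ℤ) := genS (fun m => 2 * m ^ 2) w

lemma id_two (u : ℤ → ℤ) (hu : ∀ p, u (chg p).1 * u (chg p).2 = u p.1 * 1) :
    psiS u * psiS u = phiS u * psiT (fun _ => 1) := by
  have g1 := goodDeg_of _ deg_psi
  have g2 := goodDeg_of _ abs_le_sq'
  have g3 := goodDeg_of _ deg_psi2
  rw [genS_mul g1 g1, genS_mul g2 g3]
  exact (genS_reindex (g1.prod g1) chg chg_inj chg_deg hu
    (fun i hi => (hi (chg_surj i)).elim)).symm

lemma id_one : phiS (fun _ => 1) * phiS sgn2 = phiT sgn2 * phiT sgn2 := by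
  have g2 := goodDeg_of _ abs_le_sq'
  have g4 := goodDeg_of _ deg_phi2
  rw [genS_mul g2 g2, genS_mul g4 g4]
  rw [genS_cancel (v := fun p => if (p.1 + p.2) % 2 = 0 then sgn2 p.2 else 0) (g2.prod g2)
    Prod.swap Prod.swap_swap]
  · refine (genS_reindex (g2.prod g2) (fun p : ℤ × ℤ => (p.1 + p.2, p.1 - p.2)) ?_ ?_ ?_ ?_).symm
    · rintro ⟨a, b⟩ ⟨c, d⟩ h
      simp only [Prod.mk.injEq] at h ⊢
      omega
    · rintro ⟨a, b⟩
      ring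
    · rintro ⟨a, b⟩
      have : (a + b + (a - b)) % 2 = 0 := by omega
      simp only [this, if_true]
      rw [← sgn2_add]
      apply sgn2_congr
      omega
    · rintro ⟨a, b⟩ h
      dsimp only
      rw [if_neg]
      intro h'
      apply h
      refine ⟨((a + b) / 2, (a - b) / 2), ?_⟩
      simp only [Prod.mk.injEq]
      omega
  · rintro ⟨a, b⟩
    simp only [Prod.swap]
    ring
  · rintro ⟨a, b⟩
    simp only [Prod.swap, one_mul]
    by_cases h : (a + b) % 2 = 0
    · rw [if_pos h, if_pos (by omega)]
    · rw [if_neg h, if_neg (by omega), sgn2_opp _ _ (by omega)]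
      rfl

lemma id_three : psiS (fun _ => 1) * psiS sgn2 =
    genS (fun p : ℤ × ℤ => 4 * p.1 ^ 2 + (4 * p.2 ^ 2 + 2 * p.2)) (fun p => sgn2 (p.2 + p.1)) := by
  have g1 := goodDeg_of _ deg_psi
  have g2 := goodDeg_of _ abs_le_sq'
  have g3 := goodDeg_of _ deg_psi2
  rw [genS_mul g1 g1]
  rw [← genS_reindex (v := fun p => 1 * sgn2 (chg p).2) (g1.prod g1) chg chg_inj chg_deg
    (fun _ => rfl) (fun i hi => (hi (chg_surj i)).elim)]
  rw [genS_cancel (v := fun p => if p.1 % 2 = 0 then sgn2 (chg p).2 else 0) (g2.prod g3)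
    (fun p => (-p.1, p.2)) (fun p => by simp)]
  · refine (genS_reindex (g2.prod g3) (fun p : ℤ × ℤ => (2 * p.1, p.2)) ?_ ?_ ?_ ?_).symm
    · rintro ⟨a, b⟩ ⟨c, d⟩ h
      simp only [Prod.mk.injEq] at h ⊢
      omega
    · rintro ⟨a, b⟩
      ring
    · rintro ⟨a, b⟩
      have : (2 * a) % 2 = 0 := by omega
      simp only [this, if_true, chg_even]
      apply sgn2_congr
      omega
    · rintro ⟨a, b⟩ h
      dsimp only
      rw [if_neg]
      intro h'
      apply h
      refine ⟨(a / 2, b), ?_⟩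
      simp only [Prod.mk.injEq]
      exact ⟨by omega, trivial⟩
  · rintro ⟨a, b⟩
    ring
  · rintro ⟨x, m⟩
    dsimp only
    rcases int_cases x with ⟨t, rfl⟩ | ⟨t, rfl⟩
    · rw [if_pos (by omega), if_pos (by omega)]
      ring
    · rw [if_neg (by omega), if_neg (by omega),
        show -(2 * t + 1) = 2 * (-t - 1) + 1 by ring, chg_odd, chg_odd, one_mul, one_mul,
        sgn2_opp _ _ (by dsimp only; omega)]
      rfl

lemma main_id : psiS (fun _ => 1) * psiS sgn2 = phiT sgn2 * psiT (fun _ => 1) := by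
  have h1 := id_two (fun _ => 1) (fun _ => rfl)
  have h2 := id_two sgn2 chg_sgn
  have h3 := id_one
  have hsq : (psiS (fun _ => 1) * psiS sgn2) ^ 2 = (phiT sgn2 * psiT (fun _ => 1)) ^ 2 := by
    linear_combination (psiS sgn2 * psiS sgn2) * h1 + (phiS (fun _ => 1) * psiT (fun _ => 1)) * h2
      + psiT (fun _ => 1) ^ 2 * h3
  rcases sq_eq_sq_iff_eq_or_eq_neg.1 hsq with h | h
  · exact h
  · exfalso
    have := congrArg PowerSeries.constantCoeff h
    simp only [map_mul, map_neg] at this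
    rw [genS_const _ _ deg_psi (by norm_num), genS_const _ _ deg_psi (by norm_num),
      genS_const _ _ deg_phi2 (by norm_num), genS_const _ _ deg_psi2 (by norm_num)] at this
    simp [sgn2] at this

lemma count_diff {α : Type} (T S1 S2 : Set α) (hT : T.Finite) (w : α → ℤ)
    (h1 : ∀ p, p ∈ S1 ↔ p ∈ T ∧ w p = 1) (h2 : ∀ p, p ∈ S2 ↔ p ∈ T ∧ w p = -1)
    (hw : ∀ p ∈ T, w p = 1 ∨ w p = -1) :
    (S1.ncard : ℤ) - (S2.ncard : ℤ) = ∑ᶠ p ∈ T, w p := by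
  classical
  have hS : T = S1 ∪ S2 := by
    ext p
    have := hw p
    simp only [Set.mem_union, h1, h2]
    tauto
  have hd : Disjoint S1 S2 := by
    rw [Set.disjoint_left]
    intro p hp hp'
    have := ((h1 p).1 hp).2
    have := ((h2 p).1 hp').2
    omega
  have f1 : S1.Finite := hT.subset (hS ▸ Set.subset_union_left)
  have f2 : S2.Finite := hT.subset (hS ▸ Set.subset_union_right)
  rw [hS, finsum_mem_union hd f1 f2]
  rw [finsum_mem_congr rfl (fun p hp => ((h1 p).1 hp).2),
    finsum_mem_congr rfl (fun p hp => ((h2 p).1 hp).2)]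
  rw [finsum_mem_eq_finite_toFinset_sum _ f1, finsum_mem_eq_finite_toFinset_sum _ f2,
    Set.ncard_eq_toFinset_card _ f1, Set.ncard_eq_toFinset_card _ f2]
  simp
  ring

/-- Passing from `m` to `x = |4m+1|`. -/
lemma bij_abs (c : ℤ) (k : ℕ) :
    Set.BijOn (fun p : ℤ × ℤ => (|4 * p.2 + 1|, p.1))
      {p | c * p.1 ^ 2 + (4 * p.2 ^ 2 + 2 * p.2) = ((2 * k : ℕ) : ℤ)}
      {pr | (8 * k + 1 : ℤ) = pr.1 ^ 2 + 4 * c * pr.2 ^ 2 ∧ 0 < pr.1} := by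
  refine ⟨?_, ?_, ?_⟩
  · rintro ⟨y, m⟩ h
    simp only [Set.mem_ofPred_eq] at h ⊢
    push_cast at h
    refine ⟨?_, abs_pos.2 (by omega)⟩
    rw [sq_abs]
    linear_combination -4 * h
  · rintro ⟨y, m⟩ - ⟨z, l⟩ - h
    simp only [Prod.mk.injEq] at h ⊢
    refine ⟨h.2, ?_⟩
    rcases abs_eq_abs.1 h.1 with h' | h' <;> omega
  · rintro ⟨x, y⟩ ⟨h, hx⟩
    dsimp only at h hx
    have hodd : x % 2 = 1 := by
      rcases int_cases x with ⟨t, rfl⟩ | ⟨t, rfl⟩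
      · exfalso
        have : 2 * (4 * (k : ℤ)) + 1 = 2 * (2 * t ^ 2 + 2 * c * y ^ 2) := by
          linear_combination h
        omega
      · omega
    have : ∃ m, |4 * m + 1| = x := by
      rcases (by omega : x % 4 = 1 ∨ x % 4 = 3) with h4 | h4
      · refine ⟨(x - 1) / 4, ?_⟩
        rw [show 4 * ((x - 1) / 4) + 1 = x by omega, abs_of_pos hx]
      · refine ⟨(-x - 1) / 4, ?_⟩
        rw [show 4 * ((-x - 1) / 4) + 1 = -x by omega, abs_neg, abs_of_pos hx]
    obtain ⟨m, rfl⟩ := this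
    refine ⟨(y, m), ?_, rfl⟩
    simp only [Set.mem_ofPred_eq]
    rw [sq_abs] at h
    push_cast
    have : 4 * (c * y ^ 2 + (4 * m ^ 2 + 2 * m)) = 4 * (2 * (k : ℤ)) := by
      linear_combination -h
    omega

lemma deg_phi4 (x : ℤ) : |x| ≤ 4 * x ^ 2 := by
  have := abs_le_sq' x
  have := sq_nonneg x
  linarith

lemma coeff_id (k : ℕ) :
    ∑ᶠ p ∈ {p : ℤ × ℤ | 4 * p.1 ^ 2 + (4 * p.2 ^ 2 + 2 * p.2) = ((2 * k : ℕ) : ℤ)},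
      sgn2 (p.2 + p.1) =
    ∑ᶠ p ∈ {p : ℤ × ℤ | 2 * p.1 ^ 2 + (4 * p.2 ^ 2 + 2 * p.2) = ((2 * k : ℕ) : ℤ)},
      sgn2 p.1 * 1 := by
  have h := main_id
  rw [id_three, genS_mul (goodDeg_of _ deg_phi2) (goodDeg_of _ deg_psi2)] at h
  have := congrArg (PowerSeries.coeff (2 * k)) h
  simpa only [genS, PowerSeries.coeff_mk] using this

/-- The weight on the `x ^ 2 + 16 y ^ 2` side. -/
def wtA (p : ℤ × ℤ) : ℤ :=
  if (p.1 % 8 = 1 ∨ p.1 % 8 = 7) then sgn2 p.2 else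
    if (p.1 % 8 = 3 ∨ p.1 % 8 = 5) then - sgn2 p.2 else 0

lemma odd_of_eq (k x z : ℤ) (h : 8 * k + 1 = x ^ 2 + 4 * z) : x % 2 = 1 := by
  rcases int_cases x with ⟨t, rfl⟩ | ⟨t, rfl⟩
  · exfalso
    have : 2 * (4 * k) + 1 = 2 * (2 * t ^ 2 + 2 * z) := by
      linear_combination h
    omega
  · omega

theorem threefield_count_kaplansky (k : ℕ) :
    (({pr : ℤ × ℤ | (8 * k + 1 : ℤ) = pr.1 ^ 2 + 16 * pr.2 ^ 2 ∧ 0 < pr.1 ∧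
        (((pr.1 ≡ 1 [ZMOD 8] ∨ pr.1 ≡ -1 [ZMOD 8]) ∧ Even pr.2) ∨
          ((pr.1 ≡ 3 [ZMOD 8] ∨ pr.1 ≡ -3 [ZMOD 8]) ∧ Odd pr.2))}.ncard : ℤ) -
      ({pr : ℤ × ℤ | (8 * k + 1 : ℤ) = pr.1 ^ 2 + 16 * pr.2 ^ 2 ∧ 0 < pr.1 ∧
        (((pr.1 ≡ 3 [ZMOD 8] ∨ pr.1 ≡ -3 [ZMOD 8]) ∧ Even pr.2) ∨
          ((pr.1 ≡ 1 [ZMOD 8] ∨ pr.1 ≡ -1 [ZMOD 8]) ∧ Odd pr.2))}.ncard : ℤ)) =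
    (({pr : ℤ × ℤ | (8 * k + 1 : ℤ) = pr.1 ^ 2 + 8 * pr.2 ^ 2 ∧ 0 < pr.1 ∧
        Even pr.2}.ncard : ℤ) -
      ({pr : ℤ × ℤ | (8 * k + 1 : ℤ) = pr.1 ^ 2 + 8 * pr.2 ^ 2 ∧ 0 < pr.1 ∧
        Odd pr.2}.ncard : ℤ)) := by
  have e1 := bij_abs 4 k
  have e2 := bij_abs 2 k
  have F1 := (((goodDeg_of _ deg_phi4).prod (goodDeg_of _ deg_psi2)).2 ((2 * k : ℕ) : ℤ)).image
    (fun p : ℤ × ℤ => (|4 * p.2 + 1|, p.1))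
  have F2 := (((goodDeg_of _ deg_phi2).prod (goodDeg_of _ deg_psi2)).2 ((2 * k : ℕ) : ℤ)).image
    (fun p : ℤ × ℤ => (|4 * p.2 + 1|, p.1))
  rw [e1.image_eq] at F1
  rw [e2.image_eq] at F2
  norm_num only at e1 e2 F1 F2
  rw [count_diff _ _ _ F1 wtA, count_diff _ _ _ F2 (fun p => sgn2 p.2)]
  · rw [← finsum_mem_eq_of_bijOn _ e1 (f := fun p => sgn2 (p.2 + p.1)),
      ← finsum_mem_eq_of_bijOn _ e2 (f := fun p => sgn2 p.1 * 1)]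
    · exact_mod_cast coeff_id k
    · intro p _
      simp
    · rintro ⟨y, m⟩ _
      simp only [wtA, sgn2]
      rcases abs_cases (4 * m + 1) with ⟨h, _⟩ | ⟨h, _⟩ <;> rw [h] <;> split_ifs <;> omega
  · rintro ⟨x, y⟩
    simp only [Set.mem_ofPred_eq, sgn2, Int.even_iff, and_assoc]
    refine and_congr_right fun _ => and_congr_right fun _ => ?_
    split_ifs <;> norm_num <;> try omega
  · rintro ⟨x, y⟩
    simp only [Set.mem_ofPred_eq, sgn2, Int.odd_iff, and_assoc]
    refine and_congr_right fun _ => and_congr_right fun _ => ?_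
    split_ifs <;> norm_num <;> try omega
  · rintro ⟨x, y⟩ _
    simp only [sgn2]
    split_ifs <;> omega
  · rintro ⟨x, y⟩
    simp only [Set.mem_ofPred_eq, wtA, sgn2, Int.even_iff, Int.odd_iff, and_assoc, Int.ModEq]
    refine and_congr_right fun _ => and_congr_right fun _ => ?_
    split_ifs <;> norm_num <;> try omega
  · rintro ⟨x, y⟩
    simp only [Set.mem_ofPred_eq, wtA, sgn2, Int.even_iff, Int.odd_iff, and_assoc, Int.ModEq]
    refine and_congr_right fun _ => and_congr_right fun _ => ?_
    split_ifs <;> norm_num <;> try omega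
  · rintro ⟨x, y⟩ ⟨h, _⟩
    have := odd_of_eq k x (4 * y ^ 2) (by dsimp only at h; linear_combination h)
    simp only [wtA, sgn2]
    split_ifs <;> omega
end

section
/- For every nonnegative integer k, writing n = 4k+1, the following equality of integers holds: 2 times [ the number of pairs (x,y) ∈ ℤ² with n = x² + y², x > 0, x odd, and x + 3y ≡ ±1 (mod 5), minus the number of pairs (x,y) ∈ ℤ² with n = x² + y², x > 0, x odd, and x + 3y ≡ ±2 (mod 5) ] equals the number of pairs (x,y) ∈ ℤ² with n = x² + 5y², x odd and y even, minus the number of pairs (x,y) ∈ ℤ² with n = x² + 5y², x even and y odd. -/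
namespace Brink

open PowerSeries Finset

noncomputable section

/-- sign of an integer's parity -/
def sg (m : ℤ) : ℚ⟦X⟧ := if Even m then 1 else -1

lemma sg_succ (m : ℤ) : sg (m + 1) = - sg m := by
  unfold sg; by_cases h : Even m <;> simp [h]

/-- exponent of the theta series -/
def ex (a b : ℕ) (m : ℤ) : ℕ := a * (m * (m + 1) / 2).toNat + b * (m * (m - 1) / 2).toNat

lemma tri_nonneg (m : ℤ) : 0 ≤ m * (m + 1) := by
  rcases le_or_gt 0 m with h | h
  · positivity
  · nlinarith

lemma two_ex (a b : ℕ) (m : ℤ) :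
    2 * (ex a b m : ℤ) = a * (m * (m + 1)) + b * (m * (m - 1)) := by
  have h1 : 2 * (m * (m + 1) / 2) = m * (m + 1) :=
    Int.two_mul_ediv_two_of_even (Int.even_mul_succ_self m)
  have h2 : 2 * (m * (m - 1) / 2) = m * (m - 1) :=
    Int.two_mul_ediv_two_of_even (Int.even_mul_pred_self m)
  have p1 := tri_nonneg m
  have p2 := tri_nonneg (m - 1)
  have p2' : 0 ≤ m * (m - 1) := by nlinarith
  unfold ex
  push_cast
  rw [Int.toNat_of_nonneg (by omega), Int.toNat_of_nonneg (by omega)]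
  linear_combination (a : ℤ) * h1 + (b : ℤ) * h2

lemma ex_ge (a b : ℕ) (ha : 1 ≤ a) (hb : 1 ≤ b) (m : ℤ) : m.natAbs ≤ ex a b m := by
  have h := two_ex a b m
  have p1 := tri_nonneg m
  have p2 := tri_nonneg (m - 1)
  have p2' : 0 ≤ m * (m - 1) := by nlinarith
  have ha' : (1 : ℤ) ≤ a := by exact_mod_cast ha
  have hb' : (1 : ℤ) ≤ b := by exact_mod_cast hb
  have q1 := mul_le_mul_of_nonneg_right ha' p1
  have q2 := mul_le_mul_of_nonneg_right hb' p2'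
  have h3 : m ≤ m * m := by nlinarith
  have h4 : - m ≤ m * m := by nlinarith
  have : (m.natAbs : ℤ) ≤ ex a b m := by
    rw [Int.natCast_natAbs]
    apply abs_le'.2
    constructor <;> nlinarith
  exact_mod_cast this

/-- q-Pochhammer -/
def P (d n : ℕ) : ℚ⟦X⟧ := ∏ j ∈ range n, (1 - X ^ (d * (j + 1)))

lemma P_succ (d n : ℕ) : P d (n + 1) = P d n * (1 - X ^ (d * (n + 1))) := prod_range_succ _ _

lemma P_const (d : ℕ) (hd : 1 ≤ d) (n : ℕ) : constantCoeff (P d n) ≠ 0 := by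
  unfold P
  rw [map_prod]
  apply prod_ne_zero_iff.2
  intro j _
  have : d * (j + 1) ≠ 0 := by positivity
  simp [this]

lemma P_inv (d : ℕ) (hd : 1 ≤ d) (n : ℕ) : P d n * (P d n)⁻¹ = 1 :=
  PowerSeries.mul_inv_cancel _ (P_const d hd n)

lemma P_inv_succ (d : ℕ) (hd : 1 ≤ d) (n : ℕ) :
    (P d n)⁻¹ = (1 - X ^ (d * (n + 1))) * (P d (n + 1))⁻¹ := by
  have h1 := P_inv d hd n
  have h2 := P_inv d hd (n + 1)
  rw [P_succ] at h2 ⊢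
  linear_combination (-(P d n)⁻¹) * h2 + ((1 - X ^ (d * (n + 1))) * (P d n * (1 - X ^ (d * (n + 1))))⁻¹) * h1

/-- Gaussian binomial -/
def g (d n k : ℕ) : ℚ⟦X⟧ := if k ≤ n then P d n * (P d k)⁻¹ * (P d (n - k))⁻¹ else 0

lemma g_zero (d : ℕ) (hd : 1 ≤ d) (n : ℕ) : g d n 0 = 1 := by
  have h0 : P d 0 = 1 := by simp [P]
  simp [g, h0, P_inv d hd n]

lemma g_self (d : ℕ) (hd : 1 ≤ d) (n : ℕ) : g d n n = 1 := by
  have h0 : P d 0 = 1 := by simp [P]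
  simp [g, h0, P_inv d hd n]

lemma g_gt (d n : ℕ) : g d n (n + 1) = 0 := by simp [g]

lemma pascal1 (d : ℕ) (hd : 1 ≤ d) (n k : ℕ) (hk : k ≤ n) :
    g d (n + 1) (k + 1) = g d n (k + 1) + X ^ (d * (n - k)) * g d n k := by
  obtain ⟨l, rfl⟩ := Nat.exists_eq_add_of_le hk
  rcases l with _ | l
  · simp [g_self d hd, g_gt]
  · have e1 : k + (l + 1) + 1 - (k + 1) = l + 1 := by omega
    have e2 : k + (l + 1) - (k + 1) = l := by omega
    have e3 : k + (l + 1) - k = l + 1 := by omega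
    simp only [g, e1, e2, e3]
    rw [if_pos (by omega), if_pos (by omega), if_pos (by omega), P_succ, P_inv_succ d hd k,
      P_inv_succ d hd l]
    ring

lemma pascal2 (d : ℕ) (hd : 1 ≤ d) (n k : ℕ) (hk : k ≤ n) :
    g d (n + 1) (k + 1) = g d n k + X ^ (d * (k + 1)) * g d n (k + 1) := by
  obtain ⟨l, rfl⟩ := Nat.exists_eq_add_of_le hk
  rcases l with _ | l
  · simp [g_self d hd, g_gt]
  · have e1 : k + (l + 1) + 1 - (k + 1) = l + 1 := by omega
    have e2 : k + (l + 1) - (k + 1) = l := by omega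
    have e3 : k + (l + 1) - k = l + 1 := by omega
    simp only [g, e1, e2, e3]
    rw [if_pos (by omega), if_pos (by omega), if_pos (by omega), P_succ, P_inv_succ d hd k,
      P_inv_succ d hd l]
    ring

/-- general term -/
def tm (a b : ℕ) (m : ℤ) : ℚ⟦X⟧ := sg m * X ^ ex a b m

lemma stepM (a b M N : ℕ) (h : 1 ≤ a + b) :
    ∑ k ∈ range (M + 1 + N + 1), g (a + b) (M + 1 + N) k * tm a b ((k : ℤ) - N) =
      (1 - X ^ (a + (a + b) * M)) *
        ∑ k ∈ range (M + N + 1), g (a + b) (M + N) k * tm a b ((k : ℤ) - N) := by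
  have e : M + 1 + N = M + N + 1 := by ring
  rw [e, sum_range_succ']
  have key : ∀ k ∈ range (M + N + 1), g (a + b) (M + N + 1) (k + 1) * tm a b (((k + 1 : ℕ) : ℤ) - N)
      = g (a + b) (M + N) (k + 1) * tm a b (((k + 1 : ℕ) : ℤ) - N)
        - X ^ (a + (a + b) * M) * (g (a + b) (M + N) k * tm a b ((k : ℤ) - N)) := by
    intro k hk
    have hk' : k ≤ M + N := by simpa [Nat.lt_succ_iff] using hk
    rw [pascal1 _ h _ _ hk']
    have ee : ((k + 1 : ℕ) : ℤ) - N = ((k : ℤ) - N) + 1 := by push_cast; ring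
    have hx : (a + b) * (M + N - k) + ex a b (((k : ℤ) - N) + 1) =
        a + (a + b) * M + ex a b ((k : ℤ) - N) := by
      have t1 := two_ex a b (((k : ℤ) - N) + 1)
      have t2 := two_ex a b ((k : ℤ) - N)
      zify [hk']
      linarith
    have hX : (X : ℚ⟦X⟧) ^ ((a + b) * (M + N - k)) * X ^ (ex a b (((k : ℤ) - N) + 1)) =
        X ^ (a + (a + b) * M) * X ^ ex a b ((k : ℤ) - N) := by
      rw [← pow_add, hx, pow_add]
    rw [ee]
    simp only [tm, sg_succ]
    linear_combination (- g (a + b) (M + N) k * sg ((k : ℤ) - N)) * hX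
  rw [sum_congr rfl key, sum_sub_distrib, ← mul_sum]
  have h2 := sum_range_succ' (fun k => g (a + b) (M + N) k * tm a b ((k : ℤ) - N)) (M + N + 1)
  rw [sum_range_succ, g_gt] at h2
  simp only [g_zero _ h] at h2 ⊢
  linear_combination -h2

lemma stepN (a b M N : ℕ) (h : 1 ≤ a + b) :
    ∑ k ∈ range (M + (N + 1) + 1), g (a + b) (M + (N + 1)) k * tm a b ((k : ℤ) - (N + 1 : ℕ)) =
      (1 - X ^ (b + (a + b) * N)) *
        ∑ k ∈ range (M + N + 1), g (a + b) (M + N) k * tm a b ((k : ℤ) - N) := by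
  have e : M + (N + 1) = M + N + 1 := by ring
  rw [e, sum_range_succ']
  have key : ∀ k ∈ range (M + N + 1),
      g (a + b) (M + N + 1) (k + 1) * tm a b (((k + 1 : ℕ) : ℤ) - (N + 1 : ℕ))
      = g (a + b) (M + N) k * tm a b ((k : ℤ) - N)
       + X ^ ((a + b) * (k + 1)) * g (a + b) (M + N) (k + 1) * tm a b (((k + 1 : ℕ) : ℤ) - (N + 1 : ℕ)) := by
    intro k hk
    have hk' : k ≤ M + N := by simpa [Nat.lt_succ_iff] using hk
    rw [pascal2 _ h _ _ hk']
    have ee : ((k + 1 : ℕ) : ℤ) - (N + 1 : ℕ) = ((k : ℤ) - N) := by push_cast; ring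
    rw [ee]
    ring
  have key2 : ∀ k ∈ range (M + N + 1),
      X ^ ((a + b) * k) * g (a + b) (M + N) k * tm a b ((k : ℤ) - (N + 1 : ℕ)) =
      - (X ^ (b + (a + b) * N) * (g (a + b) (M + N) k * tm a b ((k : ℤ) - N))) := by
    intro k hk
    have ee : (k : ℤ) - N = ((k : ℤ) - (N + 1 : ℕ)) + 1 := by push_cast; ring
    have hx : (a + b) * k + ex a b ((k : ℤ) - (N + 1 : ℕ)) =
        b + (a + b) * N + ex a b ((k : ℤ) - N) := by
      have t1 := two_ex a b ((k : ℤ) - (N + 1 : ℕ))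
      have t2 := two_ex a b ((k : ℤ) - N)
      zify
      push_cast at t1
      linarith
    have hX : (X : ℚ⟦X⟧) ^ ((a + b) * k) * X ^ (ex a b ((k : ℤ) - (N + 1 : ℕ))) =
        X ^ (b + (a + b) * N) * X ^ ex a b ((k : ℤ) - N) := by
      rw [← pow_add, hx, pow_add]
    have hs : sg ((k : ℤ) - N) = - sg ((k : ℤ) - (N + 1 : ℕ)) := by rw [ee, sg_succ]
    simp only [tm, hs]
    linear_combination (g (a + b) (M + N) k * sg ((k : ℤ) - (N + 1 : ℕ))) * hX
  rw [sum_congr rfl key, sum_add_distrib]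
  have h2 := sum_range_succ' (fun k => X ^ ((a + b) * k) * g (a + b) (M + N) k *
    tm a b ((k : ℤ) - (N + 1 : ℕ))) (M + N + 1)
  rw [sum_range_succ, g_gt, sum_congr rfl key2, sum_neg_distrib, ← mul_sum] at h2
  simp only [g_zero _ h] at h2 ⊢
  simp only [mul_zero, pow_zero] at h2
  linear_combination -h2

lemma finite_triple (a b M N : ℕ) (h : 1 ≤ a + b) :
    ∑ k ∈ range (M + N + 1), g (a + b) (M + N) k * tm a b ((k : ℤ) - N) =
      (∏ j ∈ range M, (1 - X ^ (a + (a + b) * j))) * ∏ j ∈ range N, (1 - X ^ (b + (a + b) * j)) := by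
  induction M with
  | zero =>
    induction N with
    | zero => simp [g_zero _ h, tm, sg, ex]
    | succ N ih => rw [stepN a b 0 N h, ih, prod_range_succ]; ring
  | succ M ih => rw [stepM a b M N h, ih, prod_range_succ]; ring

lemma P_dvd (d : ℕ) (hd : 1 ≤ d) (j l : ℕ) (h : j ≤ l) : (X : ℚ⟦X⟧) ^ (j + 1) ∣ P d l - P d j := by
  induction l, h using Nat.le_induction with
  | base => simp
  | succ l hl ih =>
    have : P d (l + 1) - P d j = (P d l - P d j) - X ^ (d * (l + 1)) * P d l := by
      rw [P_succ]; ring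
    rw [this]
    apply dvd_sub ih
    apply Dvd.dvd.mul_right
    apply pow_dvd_pow
    nlinarith

lemma g_dvd (d : ℕ) (hd : 1 ≤ d) (N k j : ℕ) (hk : k ≤ N + N) (h1 : j ≤ N) (h2 : j ≤ k)
    (h3 : j ≤ N + N - k) : (X : ℚ⟦X⟧) ^ (j + 1) ∣ P d N * g d (N + N) k - 1 := by
  have i1 := P_inv d hd k
  have i2 := P_inv d hd (N + N - k)
  have : P d N * g d (N + N) k - 1 =
    (P d N * (P d (N + N) - P d j) + (P d N - P d j) * P d j - (P d k - P d j) * P d (N + N - k)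
      - P d j * (P d (N + N - k) - P d j)) * ((P d k)⁻¹ * (P d (N + N - k))⁻¹) := by
    rw [g, if_pos hk]
    linear_combination (1 : ℚ⟦X⟧) * i2 + (P d (N + N - k) * (P d (N + N - k))⁻¹) * i1
  rw [this]
  apply Dvd.dvd.mul_right
  refine dvd_sub (dvd_sub (dvd_add ?_ ?_) ?_) ?_
  · exact (P_dvd d hd _ _ (by omega)).mul_left _
  · exact (P_dvd d hd _ _ (by omega)).mul_right _
  · exact (P_dvd d hd _ _ (by omega)).mul_right _
  · exact (P_dvd d hd _ _ (by omega)).mul_left _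

lemma sum_reindex (f : ℤ → ℚ⟦X⟧) (N : ℕ) :
    ∑ k ∈ range (N + N + 1), f ((k : ℤ) - N) = ∑ m ∈ Icc (-(N : ℤ)) N, f m := by
  apply sum_bij' (fun (k : ℕ) _ => (k : ℤ) - N) (fun (m : ℤ) _ => (m + N).toNat)
  · intro k hk; simp at hk ⊢; omega
  · intro m hm; simp at hm ⊢; omega
  · intro k hk; simp
  · intro m hm; simp at hm ⊢; omega
  · intro k hk; rfl

/-- truncated theta series -/
def S (a b N : ℕ) : ℚ⟦X⟧ := ∑ m ∈ Icc (-(N : ℤ)) N, tm a b m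

/-- truncated product -/
def Q (a b N : ℕ) : ℚ⟦X⟧ :=
  ∏ j ∈ range N, ((1 - X ^ (a + (a + b) * j)) * (1 - X ^ (b + (a + b) * j)) *
    (1 - X ^ ((a + b) * (j + 1))))

lemma triple (a b N : ℕ) (ha : 1 ≤ a) (hb : 1 ≤ b) : (X : ℚ⟦X⟧) ^ (N + 1) ∣ Q a b N - S a b N := by
  have h : 1 ≤ a + b := by omega
  have e1 : Q a b N = ∑ k ∈ range (N + N + 1), P (a + b) N *
      (g (a + b) (N + N) k * tm a b ((k : ℤ) - N)) := by
    rw [← mul_sum, finite_triple a b N N h, Q, prod_mul_distrib, prod_mul_distrib, P]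
    ring
  rw [e1, S, ← sum_reindex, ← sum_sub_distrib]
  apply dvd_sum
  intro k hk
  have hk' : k ≤ N + N := by simpa [Nat.lt_succ_iff] using hk
  have e2 : P (a + b) N * (g (a + b) (N + N) k * tm a b ((k : ℤ) - N)) - tm a b ((k : ℤ) - N) =
    (P (a + b) N * g (a + b) (N + N) k - 1) * X ^ ex a b ((k : ℤ) - N) * sg ((k : ℤ) - N) := by
    rw [tm]; ring
  rw [e2]
  apply Dvd.dvd.mul_right
  have h4 := g_dvd (a + b) h N k (N - ((k : ℤ) - N).natAbs) hk' (by omega) (by omega) (by omega)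
  have h5 := ex_ge a b ha hb ((k : ℤ) - N)
  refine dvd_trans (pow_dvd_pow _ ?_) (a := X ^ (N + 1))
    (b := X ^ ((N - ((k : ℤ) - N).natAbs + 1) + ex a b ((k : ℤ) - N))) ?_
  · omega
  · rw [pow_add]; exact mul_dvd_mul_right h4 _

lemma Q1 (N : ℕ) : Q 2 3 N * Q 1 4 N = P 1 (5 * N) * P 5 N := by
  induction N with
  | zero => simp [Q, P]
  | succ N ih =>
    have e : 5 * (N + 1) = 5 * N + 1 + 1 + 1 + 1 + 1 := by ring
    have q1 : Q 2 3 (N + 1) = Q 2 3 N * _ := prod_range_succ _ _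
    have q2 : Q 1 4 (N + 1) = Q 1 4 N * _ := prod_range_succ _ _
    rw [q1, q2, e]
    simp only [P_succ]
    rw [mul_mul_mul_comm, ih]
    ring

lemma Q3 (c N : ℕ) : Q c (2 * c) N = P c (3 * N) := by
  induction N with
  | zero => simp [Q, P]
  | succ N ih =>
    have e : 3 * (N + 1) = 3 * N + 1 + 1 + 1 := by ring
    have q1 : Q c (2 * c) (N + 1) = Q c (2 * c) N * _ := prod_range_succ _ _
    rw [q1, e]
    simp only [P_succ]
    rw [ih]
    ring

lemma mod_mul {n : ℕ} {a b c d : ℚ⟦X⟧} (h1 : X ^ n ∣ a - b) (h2 : X ^ n ∣ c - d) :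
    X ^ n ∣ a * c - b * d := by
  have : a * c - b * d = (a - b) * c + b * (c - d) := by ring
  rw [this]
  exact dvd_add (h1.mul_right _) (h2.mul_left _)

lemma main_series (N : ℕ) :
    (X : ℚ⟦X⟧) ^ (N + 1) ∣ S 2 3 N * S 1 4 N - S 1 2 N * S 5 10 N := by
  have h1 := mod_mul (triple 2 3 N (by norm_num) (by norm_num))
    (triple 1 4 N (by norm_num) (by norm_num))
  have h2 := mod_mul (triple 1 2 N (by norm_num) (by norm_num))
    (triple 5 10 N (by norm_num) (by norm_num))
  have q1 := Q3 1 N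
  have q5 := Q3 5 N
  norm_num at q1 q5
  rw [Q1] at h1
  rw [q1, q5] at h2
  have p1 : (X : ℚ⟦X⟧) ^ (N + 1) ∣ P 1 (5 * N) - P 1 (3 * N) :=
    (pow_dvd_pow _ (by omega)).trans (P_dvd 1 le_rfl (3 * N) (5 * N) (by omega))
  have p2 : (X : ℚ⟦X⟧) ^ (N + 1) ∣ P 5 (3 * N) - P 5 N :=
    P_dvd 5 (by norm_num) N (3 * N) (by omega)
  have h3 := mod_mul p1 ((dvd_sub_comm).1 p2)
  have := dvd_add (dvd_sub h3 h1) h2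
  refine this.trans (dvd_of_eq ?_)
  ring

lemma coeff_prod (a b a' b' N k : ℕ) :
    coeff k (S a b N * S a' b' N) =
      ∑ p ∈ (Icc (-(N : ℤ)) N ×ˢ Icc (-(N : ℤ)) N) with ex a b p.1 + ex a' b' p.2 = k,
        (if Even (p.1 + p.2) then (1 : ℚ) else -1) := by
  rw [S, S, sum_mul_sum, ← sum_product', map_sum, sum_filter]
  apply sum_congr rfl
  intro p _
  have : tm a b p.1 * tm a' b' p.2 =
      C (if Even (p.1 + p.2) then (1 : ℚ) else -1) * X ^ (ex a b p.1 + ex a' b' p.2) := by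
    rw [tm, tm, sg, sg, pow_add]
    by_cases h1 : Even p.1 <;> by_cases h2 : Even p.2 <;> simp [h1, h2, Int.even_add] 
  rw [this, coeff_C_mul, coeff_X_pow]
  by_cases h : ex a b p.1 + ex a' b' p.2 = k
  · simp [h]
  · simp [h, Ne.symm h]

lemma coeff_ncard (a b a' b' k : ℕ) (ha : 1 ≤ a) (hb : 1 ≤ b) (ha' : 1 ≤ a') (hb' : 1 ≤ b') :
    coeff k (S a b k * S a' b' k) =
      ({p : ℤ × ℤ | ex a b p.1 + ex a' b' p.2 = k ∧ Even (p.1 + p.2)}.ncard : ℚ) -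
      ({p : ℤ × ℤ | ex a b p.1 + ex a' b' p.2 = k ∧ ¬ Even (p.1 + p.2)}.ncard : ℚ) := by
  rw [coeff_prod]
  set F := {p ∈ (Icc (-(k : ℤ)) k ×ˢ Icc (-(k : ℤ)) k) | ex a b p.1 + ex a' b' p.2 = k} with hF
  have mem : ∀ p : ℤ × ℤ, p ∈ F ↔ ex a b p.1 + ex a' b' p.2 = k := by
    intro p
    have h1 := ex_ge a b ha hb p.1
    have h2 := ex_ge a' b' ha' hb' p.2
    simp only [hF, mem_filter, mem_product, Finset.mem_Icc]
    constructor
    · exact fun h => h.2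
    · intro h
      refine ⟨?_, h⟩
      omega
  have s1 : {p : ℤ × ℤ | ex a b p.1 + ex a' b' p.2 = k ∧ Even (p.1 + p.2)} =
      ((F.filter (fun p => Even (p.1 + p.2)) : Finset (ℤ × ℤ)) : Set (ℤ × ℤ)) := by
    ext p; simp [mem]
  have s2 : {p : ℤ × ℤ | ex a b p.1 + ex a' b' p.2 = k ∧ ¬ Even (p.1 + p.2)} =
      ((F.filter (fun p => ¬ Even (p.1 + p.2)) : Finset (ℤ × ℤ)) : Set (ℤ × ℤ)) := by
    ext p; simp [mem]
  rw [s1, s2, Set.ncard_coe_finset, Set.ncard_coe_finset, sum_ite]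
  simp [sub_eq_add_neg]

lemma main_count (k : ℕ) :
    ({p : ℤ × ℤ | ex 2 3 p.1 + ex 1 4 p.2 = k ∧ Even (p.1 + p.2)}.ncard : ℤ) -
      ({p : ℤ × ℤ | ex 2 3 p.1 + ex 1 4 p.2 = k ∧ ¬ Even (p.1 + p.2)}.ncard : ℤ) =
    ({p : ℤ × ℤ | ex 1 2 p.1 + ex 5 10 p.2 = k ∧ Even (p.1 + p.2)}.ncard : ℤ) -
      ({p : ℤ × ℤ | ex 1 2 p.1 + ex 5 10 p.2 = k ∧ ¬ Even (p.1 + p.2)}.ncard : ℤ) := by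
  have h := (X_pow_dvd_iff.1 (main_series k)) k (by omega)
  rw [map_sub, coeff_ncard _ _ _ _ _ (by norm_num) (by norm_num) (by norm_num) (by norm_num),
    coeff_ncard _ _ _ _ _ (by norm_num) (by norm_num) (by norm_num) (by norm_num), sub_eq_zero] at h
  exact_mod_cast h


lemma cnt1 (k : ℕ) :
    {pr : ℤ × ℤ | (4 * k + 1 : ℤ) = pr.1 ^ 2 + pr.2 ^ 2 ∧ 0 < pr.1 ∧ Odd pr.1 ∧
          (pr.1 + 3 * pr.2 ≡ 1 [ZMOD 5] ∨ pr.1 + 3 * pr.2 ≡ -1 [ZMOD 5])}.ncard =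
    {p : ℤ × ℤ | ex 2 3 p.1 + ex 1 4 p.2 = k ∧ Even (p.1 + p.2)}.ncard := by
  symm
  apply Set.ncard_congr (fun p _ => if 0 < p.1 + 3 * p.2 - 1 then (p.1 + 3 * p.2 - 1, 3 * p.1 - p.2)
    else (-(p.1 + 3 * p.2 - 1), -(3 * p.1 - p.2)))
  · rintro ⟨m, l⟩ ⟨h1, h2⟩
    have t1 := two_ex 2 3 m
    have t2 := two_ex 1 4 l
    have hq : (4 * k + 1 : ℤ) = (m + 3 * l - 1) ^ 2 + (3 * m - l) ^ 2 := by
      zify at h1; push_cast at t1 t2; nlinarith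
    rw [Int.even_iff] at h2
    simp only at h2 ⊢
    split_ifs with h
    · refine ⟨hq, h, ?_, ?_⟩
      · rw [Int.odd_iff]; simp only; omega
      · simp only [Int.ModEq]; omega
    · refine ⟨by rw [hq]; simp only; ring, ?_, ?_, ?_⟩
      · simp only; omega
      · rw [Int.odd_iff]; simp only; omega
      · simp only [Int.ModEq]; omega
  · rintro ⟨m, l⟩ ⟨m', l'⟩ _ _ h
    simp only at h
    split_ifs at h <;> simp only [Prod.mk.injEq] at h ⊢ <;> omega
  · rintro ⟨x, y⟩ ⟨h1, h2, h3, h4⟩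
    simp only at h1 h2 h3 h4
    have hy : y % 2 = 0 := by
      rcases Int.emod_two_eq_zero_or_one y with hy | hy
      · exact hy
      · exfalso
        obtain ⟨u, hu⟩ := h3
        obtain ⟨v, hv⟩ : Odd y := Int.odd_iff.2 hy
        subst hu hv
        ring_nf at h1
        omega
    rw [Int.odd_iff] at h3
    simp only [Int.ModEq] at h4
    have key : ∃ m l : ℤ, Even (m + l) ∧ ((x = m + 3 * l - 1 ∧ y = 3 * m - l) ∨
        (x = -(m + 3 * l - 1) ∧ y = -(3 * m - l))) := by
      rcases h4 with h4 | h4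
      · refine ⟨(-x - 3 * y + 1) / 10, (- 3 * x + y + 3) / 10, ?_, Or.inr ?_⟩
        · rw [Int.even_iff]; omega
        · omega
      · refine ⟨(x + 3 * y + 1) / 10, (3 * x - y + 3) / 10, ?_, Or.inl ?_⟩
        · rw [Int.even_iff]; omega
        · omega
    obtain ⟨m, l, he, hh⟩ := key
    have t1 := two_ex 2 3 m
    have t2 := two_ex 1 4 l
    refine ⟨(m, l), ⟨?_, he⟩, ?_⟩
    · push_cast at t1 t2
      zify
      rcases hh with ⟨rfl, rfl⟩ | ⟨rfl, rfl⟩ <;> nlinarith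
    · simp only
      split_ifs <;> simp only [Prod.mk.injEq] <;> omega

lemma cnt2 (k : ℕ) :
    {pr : ℤ × ℤ | (4 * k + 1 : ℤ) = pr.1 ^ 2 + pr.2 ^ 2 ∧ 0 < pr.1 ∧ Odd pr.1 ∧
          (pr.1 + 3 * pr.2 ≡ 2 [ZMOD 5] ∨ pr.1 + 3 * pr.2 ≡ -2 [ZMOD 5])}.ncard =
    {p : ℤ × ℤ | ex 2 3 p.1 + ex 1 4 p.2 = k ∧ ¬ Even (p.1 + p.2)}.ncard := by
  symm
  apply Set.ncard_congr (fun p _ => if 0 < 3 * p.1 - p.2 then (3 * p.1 - p.2, -(p.1 + 3 * p.2 - 1))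
    else (-(3 * p.1 - p.2), p.1 + 3 * p.2 - 1))
  · rintro ⟨m, l⟩ ⟨h1, h2⟩
    have t1 := two_ex 2 3 m
    have t2 := two_ex 1 4 l
    have hq : (4 * k + 1 : ℤ) = (m + 3 * l - 1) ^ 2 + (3 * m - l) ^ 2 := by
      zify at h1; push_cast at t1 t2; nlinarith
    rw [Int.even_iff] at h2
    simp only at h2 ⊢
    split_ifs with h
    · refine ⟨by rw [hq]; simp only; ring, h, ?_, ?_⟩
      · rw [Int.odd_iff]; simp only; omega
      · simp only [Int.ModEq]; omega
    · refine ⟨by rw [hq]; simp only; ring, ?_, ?_, ?_⟩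
      · simp only; omega
      · rw [Int.odd_iff]; simp only; omega
      · simp only [Int.ModEq]; omega
  · rintro ⟨m, l⟩ ⟨m', l'⟩ _ _ h
    simp only at h
    split_ifs at h <;> simp only [Prod.mk.injEq] at h ⊢ <;> omega
  · rintro ⟨x, y⟩ ⟨h1, h2, h3, h4⟩
    simp only at h1 h2 h3 h4
    have hy : y % 2 = 0 := by
      rcases Int.emod_two_eq_zero_or_one y with hy | hy
      · exact hy
      · exfalso
        obtain ⟨u, hu⟩ := h3
        obtain ⟨v, hv⟩ : Odd y := Int.odd_iff.2 hy
        subst hu hv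
        ring_nf at h1
        omega
    rw [Int.odd_iff] at h3
    simp only [Int.ModEq] at h4
    have key : ∃ m l : ℤ, ¬ Even (m + l) ∧ ((x = 3 * m - l ∧ y = -(m + 3 * l - 1)) ∨
        (x = -(3 * m - l) ∧ y = m + 3 * l - 1)) := by
      rcases h4 with h4 | h4
      · refine ⟨(- 3 * x + y + 1) / 10, (x + 3 * y + 3) / 10, ?_, Or.inr ?_⟩
        · rw [Int.even_iff]; omega
        · omega
      · refine ⟨(3 * x - y + 1) / 10, (- x - 3 * y + 3) / 10, ?_, Or.inl ?_⟩
        · rw [Int.even_iff]; omega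
        · omega
    obtain ⟨m, l, he, hh⟩ := key
    have t1 := two_ex 2 3 m
    have t2 := two_ex 1 4 l
    refine ⟨(m, l), ⟨?_, he⟩, ?_⟩
    · push_cast at t1 t2
      zify
      rcases hh with ⟨rfl, rfl⟩ | ⟨rfl, rfl⟩ <;> nlinarith
    · simp only
      split_ifs <;> simp only [Prod.mk.injEq] <;> omega

/-- Solutions of `x ^ 2 + 5 * y ^ 2 = 4 * k + 1` with `y ≡ e` mod 2, `x + y ≡ r` mod 6. -/
def R (k : ℕ) (e r : ℤ) : Set (ℤ × ℤ) :=
  {p | (4 * k + 1 : ℤ) = p.1 ^ 2 + 5 * p.2 ^ 2 ∧ p.2 % 2 = e ∧ (p.1 + p.2) % 6 = r}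

lemma sol_finite (k : ℕ) : {p : ℤ × ℤ | (4 * k + 1 : ℤ) = p.1 ^ 2 + 5 * p.2 ^ 2}.Finite := by
  apply ((Set.finite_Icc (-(4 * k + 1 : ℤ)) (4 * k + 1)).prod
    (Set.finite_Icc (-(4 * k + 1 : ℤ)) (4 * k + 1))).subset
  rintro ⟨x, y⟩ h
  simp only [Set.mem_ofPred_eq] at h
  simp only [Set.mem_prod, Set.mem_Icc]
  refine ⟨⟨?_, ?_⟩, ?_, ?_⟩ <;> nlinarith

lemma R_finite (k : ℕ) (e r : ℤ) : (R k e r).Finite := (sol_finite k).subset fun _ h => h.1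

lemma R_neg (k : ℕ) (e : ℤ) : (R k e 1).ncard = (R k e 5).ncard := by
  apply Set.ncard_congr (fun p _ => (-p.1, -p.2))
  · rintro ⟨x, y⟩ ⟨h1, h2, h3⟩
    refine ⟨by rw [h1]; simp only; ring, ?_, ?_⟩ <;> simp only at * <;> omega
  · rintro ⟨x, y⟩ ⟨x', y'⟩ _ _ h
    simpa using h
  · rintro ⟨x, y⟩ ⟨h1, h2, h3⟩
    refine ⟨(-x, -y), ⟨by rw [h1]; simp only; ring, ?_, ?_⟩, by simp⟩ <;> simp only at * <;> omega

lemma R_flip (k : ℕ) : (R k 0 3).ncard = (R k 1 3).ncard := by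
  have key : ∀ x y : ℤ, (x + y) % 6 = 3 → ∃ z, z % 2 = 1 ∧ x = 3 * z - y ∧ (x + y) / 3 = z := by
    intro x y h
    exact ⟨(x + y) / 3, by omega, by omega, rfl⟩
  apply Set.ncard_congr (fun p _ => (p.2 + 2 * ((p.1 + p.2) / 3), (p.1 + p.2) / 3 - p.2))
  · rintro ⟨x, y⟩ ⟨h1, h2, h3⟩
    obtain ⟨z, hz, rfl, e⟩ := key x y h3
    simp only at h1 h2 h3 ⊢
    rw [e]
    refine ⟨by rw [h1]; simp only; ring, ?_, ?_⟩ <;> simp only <;> omega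
  · rintro ⟨x, y⟩ ⟨x', y'⟩ ⟨_, _, h⟩ ⟨_, _, h'⟩ hh
    simp only [Prod.mk.injEq] at *
    omega
  · rintro ⟨x, y⟩ ⟨h1, h2, h3⟩
    obtain ⟨z, hz, rfl, e⟩ := key x y h3
    simp only at h1 h2 h3
    refine ⟨(y + 2 * z, z - y), ⟨by rw [h1]; simp only; ring, ?_, ?_⟩, ?_⟩ <;>
      simp only [Prod.mk.injEq] <;> omega

lemma R_even (k : ℕ) :
    {p : ℤ × ℤ | ex 1 2 p.1 + ex 5 10 p.2 = k ∧ Even (p.1 + p.2)}.ncard = (R k 0 5).ncard := by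
  apply Set.ncard_congr (fun p _ => (p.1 + 5 * p.2 - 1, p.2 - p.1))
  · rintro ⟨m, l⟩ ⟨h1, h2⟩
    have t1 := two_ex 1 2 m
    have t2 := two_ex 5 10 l
    push_cast at t1 t2
    rw [Int.even_iff] at h2
    refine ⟨?_, ?_, ?_⟩
    · zify at h1; simp only at *; nlinarith
    · simp only at *; omega
    · simp only at *; omega
  · rintro ⟨m, l⟩ ⟨m', l'⟩ _ _ h
    simp only [Prod.mk.injEq] at *
    omega
  · rintro ⟨x, y⟩ ⟨h1, h2, h3⟩
    simp only at h1 h2 h3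
    obtain ⟨l, hl⟩ : ∃ l, x + y = 6 * l - 1 := ⟨(x + y + 1) / 6, by omega⟩
    have t1 := two_ex 1 2 (l - y)
    have t2 := two_ex 5 10 l
    push_cast at t1 t2
    obtain rfl : x = 6 * l - 1 - y := by omega
    refine ⟨(l - y, l), ⟨?_, ?_⟩, ?_⟩
    · zify; nlinarith
    · rw [Int.even_iff]; simp only; omega
    · simp only [Prod.mk.injEq]; omega

lemma R_odd (k : ℕ) :
    {p : ℤ × ℤ | ex 1 2 p.1 + ex 5 10 p.2 = k ∧ ¬ Even (p.1 + p.2)}.ncard = (R k 1 5).ncard := by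
  apply Set.ncard_congr (fun p _ => (p.1 + 5 * p.2 - 1, p.2 - p.1))
  · rintro ⟨m, l⟩ ⟨h1, h2⟩
    have t1 := two_ex 1 2 m
    have t2 := two_ex 5 10 l
    push_cast at t1 t2
    rw [Int.even_iff] at h2
    refine ⟨?_, ?_, ?_⟩
    · zify at h1; simp only at *; nlinarith
    · simp only at *; omega
    · simp only at *; omega
  · rintro ⟨m, l⟩ ⟨m', l'⟩ _ _ h
    simp only [Prod.mk.injEq] at *
    omega
  · rintro ⟨x, y⟩ ⟨h1, h2, h3⟩
    simp only at h1 h2 h3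
    obtain ⟨l, hl⟩ : ∃ l, x + y = 6 * l - 1 := ⟨(x + y + 1) / 6, by omega⟩
    have t1 := two_ex 1 2 (l - y)
    have t2 := two_ex 5 10 l
    push_cast at t1 t2
    obtain rfl : x = 6 * l - 1 - y := by omega
    refine ⟨(l - y, l), ⟨?_, ?_⟩, ?_⟩
    · zify; nlinarith
    · rw [Int.even_iff]; simp only; omega
    · simp only [Prod.mk.injEq]; omega

lemma R_union (k : ℕ) (e : ℤ) :
    (R k e 1 ∪ R k e 5 ∪ R k e 3).ncard = 2 * (R k e 5).ncard + (R k e 3).ncard := by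
  rw [Set.ncard_union_eq _ ((R_finite _ _ _).union (R_finite _ _ _)) (R_finite _ _ _),
    Set.ncard_union_eq _ (R_finite _ _ _) (R_finite _ _ _), R_neg]
  · ring
  · rw [Set.disjoint_left]
    rintro p ⟨_, _, h⟩ ⟨_, _, h'⟩
    omega
  · rw [Set.disjoint_left]
    rintro p (⟨_, _, h⟩ | ⟨_, _, h⟩) ⟨_, _, h'⟩ <;> omega

lemma cnt3 (k : ℕ) :
    {pr : ℤ × ℤ | (4 * k + 1 : ℤ) = pr.1 ^ 2 + 5 * pr.2 ^ 2 ∧ Odd pr.1 ∧ Even pr.2} =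
      R k 0 1 ∪ R k 0 5 ∪ R k 0 3 := by
  ext ⟨x, y⟩
  simp only [R, Set.mem_ofPred_eq, Set.mem_union, Int.odd_iff, Int.even_iff]
  constructor
  · rintro ⟨h1, h2, h3⟩
    simp only [h1, true_and]
    omega
  · intro h
    refine ⟨by tauto, by omega, by omega⟩

lemma cnt4 (k : ℕ) :
    {pr : ℤ × ℤ | (4 * k + 1 : ℤ) = pr.1 ^ 2 + 5 * pr.2 ^ 2 ∧ Even pr.1 ∧ Odd pr.2} =
      R k 1 1 ∪ R k 1 5 ∪ R k 1 3 := by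
  ext ⟨x, y⟩
  simp only [R, Set.mem_ofPred_eq, Set.mem_union, Int.odd_iff, Int.even_iff]
  constructor
  · rintro ⟨h1, h2, h3⟩
    simp only [h1, true_and]
    omega
  · intro h
    refine ⟨by tauto, by omega, by omega⟩

end

end Brink

theorem threefield_count_brink (k : ℕ) :
    2 * (({pr : ℤ × ℤ | (4 * k + 1 : ℤ) = pr.1 ^ 2 + pr.2 ^ 2 ∧ 0 < pr.1 ∧ Odd pr.1 ∧
          (pr.1 + 3 * pr.2 ≡ 1 [ZMOD 5] ∨ pr.1 + 3 * pr.2 ≡ -1 [ZMOD 5])}.ncard : ℤ) -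
        ({pr : ℤ × ℤ | (4 * k + 1 : ℤ) = pr.1 ^ 2 + pr.2 ^ 2 ∧ 0 < pr.1 ∧ Odd pr.1 ∧
          (pr.1 + 3 * pr.2 ≡ 2 [ZMOD 5] ∨ pr.1 + 3 * pr.2 ≡ -2 [ZMOD 5])}.ncard : ℤ)) =
      (({pr : ℤ × ℤ | (4 * k + 1 : ℤ) = pr.1 ^ 2 + 5 * pr.2 ^ 2 ∧ Odd pr.1 ∧
          Even pr.2}.ncard : ℤ) -
        ({pr : ℤ × ℤ | (4 * k + 1 : ℤ) = pr.1 ^ 2 + 5 * pr.2 ^ 2 ∧ Even pr.1 ∧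
          Odd pr.2}.ncard : ℤ)) := by
  have h := Brink.main_count k
  rw [Brink.cnt1, Brink.cnt2, Brink.cnt3, Brink.cnt4, Brink.R_union, Brink.R_union, h,
    Brink.R_even, Brink.R_odd, Brink.R_flip]
  push_cast
  ring
end
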